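/- arXiv:2208.04576 — 2 statements merged into one kernel-verified Lean document; each statement's English description precedes it below -/
import Mathlib

section
/- Fix an integer b ≥ 2 and γ ∈ (0,1), and assume φ is a real analytic ℤ-periodic function. Then exactly one of the following holds: (i) φ satisfies condition (H*); (ii) φ satisfies condition (H). Equivalently: if there exist two distinct sequences i, j ∈ Σ with S(x,i) = S(x,j) for all x ∈ [0,1], then S(x,i) = S(x,j) for all i, j ∈ Σ and all x ∈ [0,1]. -/
/-!
Write `F(θ) = ∑ γⁿ φ(θₙ₊₁)` on the `b`-adic solenoid `G`, the group of sequences `θ` in `ℝ/ℤ` with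
`b θₙ₊₁ = θₙ`. A pair `(x, j)` defines a point `toSol b x j` of `G` with `θ₀ = x mod 1`, and
`S(x, j) = F(toSol b x j)`. Moreover `F(bθ) = φ(θ₀) + γ F(θ)` (`solF_smul`).

Suppose `S(x, i) = S(x, j)` on `[0,1]` with `i ≠ j`. Both sides are real analytic in `x`
(`analyticAt_S`: near a given point they are restrictions of uniformly convergent series of
holomorphic functions, because `φ` has holomorphic extensions with uniform radius and bound), so
they agree on `ℝ`. The real line being dense in `G`, the function `F` has the period
`d = toSol b 0 j - toSol b 0 i`, which is nonzero and has `d₀ = 0`.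

For `t ∈ G` with `t₀ = 0` put `E_t(s) = F(s + t) - F(s)`. The functional equation gives
`E_{bt}(bs) = γ E_t(s)`, since the two terms `φ(s₀)` cancel. Hence the closed group `H` of common
periods of all the `E_t` is stable under division by `b` (`diffPeriods_shift`), and it contains `d`.
Such a group is all of `G` (`solenoid_le_of_shift`): if its projection to a coordinate were a
proper closed subgroup of the circle, it would be finite, multiplication by `b` would be a bijection
of it, and `d₀ = 0` would give `d = 0`. Therefore every `E_t` is constant, and it vanishes because
`F` is bounded. So `F(θ)` depends on `θ₀` only (`solF_eq_of_period`), which is condition (H*).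
-/

open MeasureTheory Set Filter
open scoped ENNReal NNReal Topology

namespace Skew

noncomputable section

variable (b : ℕ) (γ : ℝ) (φ : ℝ → ℝ)

/-- `j₁ + j₂ b + ⋯ + jₙ b^{n-1}`, the integer part determined by the first `n`
digits of the sequence `j`. -/
def sval (j : ℕ → Fin b) (n : ℕ) : ℕ := ∑ k ∈ Finset.range n, (j k).val * b ^ k

/-- `S(x,j) = Σ_{n≥1} γ^{n-1} φ((x + j₁ + j₂ b + ⋯ + jₙ b^{n-1})/bⁿ)` for an infinite
sequence `j ∈ Σ = Λ^{ℤ₊}`. -/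
def S (x : ℝ) (j : ℕ → Fin b) : ℝ :=
  ∑' n : ℕ, γ ^ n * φ ((x + sval b j (n + 1)) / (b : ℝ) ^ (n + 1))

/-- value of a finite word: first letter has weight `b^0`. -/
def lval : List (Fin b) → ℕ
  | [] => 0
  | a :: w => a.val + b * lval w

/-- `S(x,w)` for a finite word `w ∈ Λ^#`. -/
def Sfin (x : ℝ) (w : List (Fin b)) : ℝ :=
  ∑ n ∈ Finset.range w.length, γ ^ n * φ ((x + lval b (w.take (n + 1))) / (b : ℝ) ^ (n + 1))

/-- concatenation of a finite word with an infinite sequence. -/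
def cat (w : List (Fin b)) (j : ℕ → Fin b) : ℕ → Fin b :=
  fun n => if h : n < w.length then w.get ⟨n, h⟩ else j (n - w.length)

/-- `w(x) = (x + w₁ + w₂ b + ⋯ + wₙ b^{n-1})/bⁿ`. -/
def pt (w : List (Fin b)) (x : ℝ) : ℝ := (x + lval b w) / (b : ℝ) ^ w.length

/-- the `b`-adic interval `I_w = [w(0), w(0) + b^{-|w|})`. -/
def Iword (w : List (Fin b)) : Set ℝ :=
  Ico (pt b w 0) (pt b w 0 + ((b : ℝ) ^ w.length)⁻¹)

/-- value of a word given as a function `Fin n → Fin b`. -/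
def fval {n : ℕ} (w : Fin n → Fin b) : ℕ := ∑ k : Fin n, (w k).val * b ^ (k : ℕ)

/-- `w(x)` for a word given as a function `Fin n → Fin b`. -/
def fpt {n : ℕ} (w : Fin n → Fin b) (x : ℝ) : ℝ := (x + fval b w) / (b : ℝ) ^ n

/-- `ν` is the Bernoulli product measure `ν^{ℤ₊}` of uniform measures on `Λ = Fin b`:
a probability measure giving each cylinder of length `n` measure `b^{-n}`.  (These
conditions determine the measure uniquely.) -/
def IsBernoulli (ν : Measure (ℕ → Fin b)) : Prop :=
  IsProbabilityMeasure ν ∧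
    ∀ (n : ℕ) (w : Fin n → Fin b), ν {j | ∀ k : Fin n, j k = w k} = ((b : ℝ≥0∞) ^ n)⁻¹

/-- the measure `m_x`, pushforward of `ν^{ℤ₊}` under `j ↦ S(x,j)`. -/
def mMeas (ν : Measure (ℕ → Fin b)) (x : ℝ) : Measure ℝ := ν.map (S b γ φ x)

/-- the SRB measure `ω`: pushforward of `Leb|_{[0,1)} × ν^{ℤ₊}` under `(x,j) ↦ (x, S(x,j))`. -/
def srb (ν : Measure (ℕ → Fin b)) : Measure (ℝ × ℝ) :=
  ((volume.restrict (Ico (0 : ℝ) 1)).prod ν).map fun p => (p.1, S b γ φ p.1 p.2)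

/-- the attractor `F^φ_{b,γ}`, closure of `{(x, S(x,j)) : x ∈ [0,1), j ∈ Σ}`. -/
def attractor : Set (ℝ × ℝ) :=
  closure {p | ∃ x ∈ Ico (0 : ℝ) 1, ∃ j : ℕ → Fin b, p = (x, S b γ φ x j)}

/-- condition (H). -/
def CondH : Prop :=
  ∀ i j : ℕ → Fin b, i ≠ j → ∃ x ∈ Icc (0 : ℝ) 1, S b γ φ x i ≠ S b γ φ x j

/-- condition (H*). -/
def CondHstar : Prop :=
  ∀ i j : ℕ → Fin b, ∀ x ∈ Icc (0 : ℝ) 1, S b γ φ x i = S b γ φ x j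

/-- a measure is exact dimensional with dimension `β`. -/
def IsExactDim {X : Type*} [MetricSpace X] [MeasurableSpace X] (μ : Measure X) (β : ℝ) : Prop :=
  ∀ᵐ z ∂μ, Tendsto (fun r : ℝ => Real.log (μ (Metric.closedBall z r)).toReal / Real.log r)
    (nhdsWithin 0 (Ioi 0)) (nhds β)

/-- the `b`-adic interval of level `n` with index `j`. -/
def badicI (n : ℕ) (j : ℤ) : Set ℝ := Ico ((j : ℝ) / (b : ℝ) ^ n) ((j + 1 : ℝ) / (b : ℝ) ^ n)

/-- the entropy `H(μ, L_n)` (in base-`b` logarithm). -/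
def entropy (μ : Measure ℝ) (n : ℕ) : ℝ :=
  (∑' j : ℤ, Real.negMulLog (μ (badicI b n j)).toReal) / Real.log b

/-- the `b`-adic interval of level `n` containing `x`. -/
def badicAt (n : ℕ) (x : ℝ) : Set ℝ := badicI b n ⌊x * (b : ℝ) ^ n⌋

/-- the component measure `μ_{x,n} = μ(· | L_n(x))`. -/
def component (μ : Measure ℝ) (n : ℕ) (x : ℝ) : Measure ℝ :=
  (μ (badicAt b n x))⁻¹ • μ.restrict (badicAt b n x)

/-- `μ` is `(h,δ,m)`-entropy porous from scale `n₁` to `n₂`. -/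
def EntPorous (μ : Measure ℝ) (h δ : ℝ) (m n₁ n₂ : ℕ) : Prop :=
  (1 / (n₂ - n₁ + 1 : ℝ)) *
    ∑ i ∈ Finset.Icc n₁ n₂,
      (μ {x | (1 / m : ℝ) * entropy b (component b μ i x) (i + m) < h + δ}).toReal > 1 - δ

/-! ### The solenoid -/

/-- The `b`-adic solenoid, realised as the group of sequences `θ` in `ℝ/ℤ` with
`b θₙ₊₁ = θₙ`. Multiplication by `b` is invertible on it, with inverse the shift
`θ ↦ (n ↦ θₙ₊₁)`. -/
def solenoid (b : ℕ) : AddSubgroup (ℕ → UnitAddCircle) where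
  carrier := {θ | ∀ n, b • θ (n + 1) = θ n}
  zero_mem' := by intro n; simp
  add_mem' := by intro x y hx hy n; simp [smul_add, hx n, hy n]
  neg_mem' := by intro x hx n; simp [hx n]

/-- The fibre function `S`, seen as a function on the solenoid. -/
def solF (γ : ℝ) (Φ : UnitAddCircle → ℝ) (θ : ℕ → UnitAddCircle) : ℝ :=
  ∑' n : ℕ, γ ^ n * Φ (θ (n + 1))

lemma solenoid_pow_smul {b : ℕ} {θ : ℕ → UnitAddCircle} (hθ : θ ∈ solenoid b) (k n : ℕ) :
    b ^ k • θ (n + k) = θ n := by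
  induction k with
  | zero => simp
  | succ k ih => rw [pow_succ, mul_smul, ← add_assoc, hθ (n + k), ih]

lemma solenoid_shift {b : ℕ} {θ : ℕ → UnitAddCircle} (hθ : θ ∈ solenoid b) :
    (fun n => θ (n + 1)) ∈ solenoid b := fun n => hθ (n + 1)

lemma solenoid_smul_shift {b : ℕ} {θ : ℕ → UnitAddCircle} (hθ : θ ∈ solenoid b) :
    b • (fun n => θ (n + 1)) = θ := funext fun n => hθ n

/-- Two points of the solenoid with the same `n`-th coordinate agree up to index `n`, so a closed
set whose coordinate projections are onto contains the solenoid. -/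
lemma solenoid_subset_of_closed {b : ℕ} {C : Set (ℕ → UnitAddCircle)} (hC : IsClosed C)
    (h : ∀ n (c : UnitAddCircle), ∃ θ ∈ C, θ ∈ solenoid b ∧ θ n = c) :
    (solenoid b : Set (ℕ → UnitAddCircle)) ⊆ C := by
  intro θ hθ
  choose f hfC hfs hf using fun n => h n (θ n)
  refine hC.mem_of_tendsto (b := atTop) (f := f) ?_ (Eventually.of_forall hfC)
  rw [tendsto_pi_nhds]
  intro k
  refine tendsto_const_nhds.congr' ?_
  filter_upwards [eventually_ge_atTop k] with n hn
  obtain ⟨m, rfl⟩ := Nat.exists_eq_add_of_le hn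
  rw [← solenoid_pow_smul hθ m k, ← solenoid_pow_smul (hfs (k + m)) m k, hf]

lemma isClosed_solenoid (b : ℕ) : IsClosed (solenoid b : Set (ℕ → UnitAddCircle)) := by
  have : (solenoid b : Set (ℕ → UnitAddCircle)) = ⋂ n, {θ | b • θ (n + 1) = θ n} := by
    ext θ; simp [solenoid]
  rw [this]
  exact isClosed_iInter fun n => isClosed_eq (by fun_prop) (by fun_prop)

/-- A closed shift-invariant subgroup of the solenoid containing a nonzero `d` with `d₀ = 0` is the
whole solenoid. -/
lemma solenoid_le_of_shift {b : ℕ} {H : AddSubgroup (ℕ → UnitAddCircle)}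
    (hcl : IsClosed (H : Set (ℕ → UnitAddCircle))) (hle : H ≤ solenoid b)
    (hshift : ∀ h ∈ H, (fun n => h (n + 1)) ∈ H)
    {d : ℕ → UnitAddCircle} (hd : d ∈ H) (hd0 : d 0 = 0) (hne : d ≠ 0) :
    solenoid b ≤ H := by
  let P : AddSubgroup UnitAddCircle := H.map (Pi.evalAddMonoidHom (fun _ : ℕ => UnitAddCircle) 0)
  have hmemP : ∀ h ∈ H, ∀ n, h n ∈ P := by
    have aux : ∀ n, ∀ h ∈ H, h n ∈ P := by
      intro n
      induction n with
      | zero => exact fun h hh => ⟨h, hh, rfl⟩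
      | succ n ih => exact fun h hh => ih _ (hshift h hh)
    exact fun h hh n => aux n h hh
  have hPcl : IsClosed (P : Set UnitAddCircle) := by
    have : IsCompact (P : Set UnitAddCircle) :=
      hcl.isCompact.image (f := fun θ : ℕ → UnitAddCircle => θ 0) (continuous_apply 0)
    exact this.isClosed
  have hdense : Dense (P : Set UnitAddCircle) := by
    rw [AddCircle.dense_addSubgroup_iff_ne_zmultiples]
    intro a ha hPa
    -- multiplication by `b` is onto the finite group `P`, hence injective, which forces `d = 0`
    have hfin : Finite P := by
      rw [hPa]
      exact (finite_zmultiples.2 (addOrderOf_ne_zero_iff.1 ha)).to_subtype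
    have hsurj : Function.Surjective (fun p : P => b • p) := by
      rintro ⟨p, h, hh, rfl⟩
      exact ⟨⟨h 1, hmemP h hh 1⟩, Subtype.ext (hle hh 0)⟩
    have hinj := Finite.injective_iff_surjective.2 hsurj
    apply hne
    funext n
    induction n with
    | zero => exact hd0
    | succ n ih =>
      have : (⟨d (n + 1), hmemP d hd (n + 1)⟩ : P) = 0 := by
        apply hinj
        apply Subtype.ext
        simpa using (hle hd n).trans ih
      exact congrArg Subtype.val this
  have hPtop : ∀ c, c ∈ P := fun c => by
    have := hdense.closure_eq
    rw [hPcl.closure_eq] at this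
    exact this.ge (mem_univ c)
  refine solenoid_subset_of_closed hcl fun n c => ?_
  obtain ⟨h, hh, rfl⟩ := hPtop c
  -- `bⁿ h` has `n`-th coordinate `h₀`
  refine ⟨b ^ n • h, H.nsmul_mem hh _, hle (H.nsmul_mem hh _), ?_⟩
  simpa using solenoid_pow_smul (hle hh) n 0

section SolF

variable {b : ℕ} {γ : ℝ} {Φ : UnitAddCircle → ℝ}

lemma exists_bound_of_continuous (hΦ : Continuous Φ) : ∃ M, ∀ c, ‖Φ c‖ ≤ M := by
  obtain ⟨M, hM⟩ := isCompact_univ.exists_bound_of_continuousOn hΦ.continuousOn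
  exact ⟨M, fun c => hM c (mem_univ c)⟩

lemma norm_pow_mul_le (hγ : γ ∈ Ioo (0 : ℝ) 1) {M t : ℝ} (ht : ‖t‖ ≤ M) (n : ℕ) :
    ‖γ ^ n * t‖ ≤ γ ^ n * M := by
  rw [norm_mul, Real.norm_of_nonneg (pow_nonneg hγ.1.le n)]
  exact mul_le_mul_of_nonneg_left ht (pow_nonneg hγ.1.le n)

lemma summable_pow_mul (hγ : γ ∈ Ioo (0 : ℝ) 1) (M : ℝ) : Summable fun n : ℕ => γ ^ n * M :=
  (summable_geometric_of_lt_one hγ.1.le hγ.2).mul_right M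

lemma continuous_solF (hγ : γ ∈ Ioo (0 : ℝ) 1) (hΦ : Continuous Φ) : Continuous (solF γ Φ) := by
  obtain ⟨M, hM⟩ := exists_bound_of_continuous hΦ
  exact continuous_tsum (fun n => by fun_prop) (summable_pow_mul hγ M)
    fun n θ => norm_pow_mul_le hγ (hM _) n

lemma solF_bound (hγ : γ ∈ Ioo (0 : ℝ) 1) (hΦ : Continuous Φ) : ∃ M, ∀ θ, ‖solF γ Φ θ‖ ≤ M := by
  obtain ⟨M, hM⟩ := exists_bound_of_continuous hΦ
  exact ⟨_, fun θ => tsum_of_norm_bounded (summable_pow_mul hγ M).hasSum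
    fun n => norm_pow_mul_le hγ (hM _) n⟩

/-- The functional equation `F(bθ) = Φ(θ₀) + γ F(θ)`. -/
lemma solF_smul (hγ : γ ∈ Ioo (0 : ℝ) 1) (hΦ : Continuous Φ) {θ : ℕ → UnitAddCircle}
    (hθ : θ ∈ solenoid b) : solF γ Φ (b • θ) = Φ (θ 0) + γ * solF γ Φ θ := by
  obtain ⟨M, hM⟩ := exists_bound_of_continuous hΦ
  have hs : Summable fun n : ℕ => γ ^ n * Φ ((b • θ) (n + 1)) :=
    Summable.of_norm_bounded (summable_pow_mul hγ M) fun n => norm_pow_mul_le hγ (hM _) n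
  have h1 : ∀ n, (b • θ) (n + 1) = θ n := hθ
  rw [solF, hs.tsum_eq_zero_add, solF, ← tsum_mul_left]
  simp only [h1]
  simp [pow_succ', mul_assoc]

/-- The group of `h` in the solenoid such that `s ↦ F(s + t) - F(s)` is `h`-periodic for every `t`
with `t₀ = 0`. -/
def diffPeriods (b : ℕ) (γ : ℝ) (Φ : UnitAddCircle → ℝ) : AddSubgroup (ℕ → UnitAddCircle) where
  carrier := {h | h ∈ solenoid b ∧ ∀ s ∈ solenoid b, ∀ t ∈ solenoid b, t 0 = 0 →
    solF γ Φ (s + h + t) - solF γ Φ (s + h) = solF γ Φ (s + t) - solF γ Φ s}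
  zero_mem' := ⟨zero_mem _, fun s _ t _ _ => by simp⟩
  add_mem' := by
    rintro x y ⟨hx, hx'⟩ ⟨hy, hy'⟩
    refine ⟨add_mem hx hy, fun s hs t ht h0 => ?_⟩
    rw [← add_assoc, hy' (s + x) (add_mem hs hx) t ht h0, hx' s hs t ht h0]
  neg_mem' := by
    rintro x ⟨hx, hx'⟩
    refine ⟨neg_mem hx, fun s hs t ht h0 => ?_⟩
    have := hx' (s + -x) (add_mem hs (neg_mem hx)) t ht h0
    rw [neg_add_cancel_right] at this
    exact this.symm

lemma isClosed_diffPeriods (hγ : γ ∈ Ioo (0 : ℝ) 1) (hΦ : Continuous Φ) :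
    IsClosed (diffPeriods b γ Φ : Set (ℕ → UnitAddCircle)) := by
  have hF := continuous_solF hγ hΦ
  refine (isClosed_solenoid b).inter (?_ : IsClosed {h | ∀ s ∈ solenoid b, ∀ t ∈ solenoid b,
    t 0 = 0 → solF γ Φ (s + h + t) - solF γ Φ (s + h) = solF γ Φ (s + t) - solF γ Φ s})
  simp only [ofPred_forall]
  refine isClosed_iInter fun s => isClosed_iInter fun _ => isClosed_iInter fun t =>
    isClosed_iInter fun _ => isClosed_iInter fun _ => isClosed_eq ?_ continuous_const
  fun_prop

/-- Since `F(bs + bt) - F(bs) = γ (F(s + t) - F(s))` when `t₀ = 0`, dividing a period by `b` gives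
a period. -/
lemma diffPeriods_shift (hγ : γ ∈ Ioo (0 : ℝ) 1) (hΦ : Continuous Φ) (h : ℕ → UnitAddCircle)
    (hh : h ∈ diffPeriods b γ Φ) : (fun n => h (n + 1)) ∈ diffPeriods b γ Φ := by
  refine ⟨solenoid_shift hh.1, fun s hs t ht h0 => ?_⟩
  have hdiff : ∀ u ∈ solenoid b,
      solF γ Φ (b • u + b • t) - solF γ Φ (b • u) = γ * (solF γ Φ (u + t) - solF γ Φ u) := by
    intro u hu
    rw [← smul_add, solF_smul hγ hΦ (add_mem hu ht), solF_smul hγ hΦ hu, Pi.add_apply, h0, add_zero]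
    ring
  have key := hh.2 (b • s) (nsmul_mem hs b) (b • t) (nsmul_mem ht b) (by simp [h0])
  rw [hdiff s hs] at key
  have hu := add_mem hs (solenoid_shift hh.1)
  have h2 := hdiff _ hu
  rw [smul_add, solenoid_smul_shift hh.1, key] at h2
  exact (mul_left_cancel₀ hγ.1.ne' h2).symm

/-- If `F` has a nonzero period `d` with `d₀ = 0`, then `F(θ)` depends on `θ₀` only. -/
lemma solF_eq_of_period (hγ : γ ∈ Ioo (0 : ℝ) 1) (hΦ : Continuous Φ)
    {d : ℕ → UnitAddCircle} (hd : d ∈ solenoid b) (hd0 : d 0 = 0) (hne : d ≠ 0)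
    (hper : ∀ s ∈ solenoid b, solF γ Φ (s + d) = solF γ Φ s)
    {θ η : ℕ → UnitAddCircle} (hθ : θ ∈ solenoid b) (hη : η ∈ solenoid b) (h0 : θ 0 = η 0) :
    solF γ Φ θ = solF γ Φ η := by
  have hdH : d ∈ diffPeriods b γ Φ := by
    refine ⟨hd, fun s hs t ht _ => ?_⟩
    rw [add_right_comm, hper _ (add_mem hs ht), hper _ hs]
  have htop : solenoid b ≤ diffPeriods b γ Φ :=
    solenoid_le_of_shift (isClosed_diffPeriods hγ hΦ) (fun _ h => h.1)
      (diffPeriods_shift hγ hΦ) hdH hd0 hne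
  -- so `F(s + t) - F(s)` is independent of `s`, and boundedness of `F(s + nt)` makes it vanish
  set t := θ - η with ht_def
  have ht : t ∈ solenoid b := sub_mem hθ hη
  have ht0 : t 0 = 0 := by simp [ht_def, h0]
  have hconst : ∀ s ∈ solenoid b, solF γ Φ (s + t) - solF γ Φ s = solF γ Φ t - solF γ Φ 0 := by
    intro s hs
    simpa using (htop hs).2 0 (zero_mem _) t ht ht0
  have hn : ∀ n : ℕ, solF γ Φ (n • t) - solF γ Φ 0 = n * (solF γ Φ t - solF γ Φ 0) := by
    intro n
    induction n with
    | zero => simp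
    | succ n ih =>
      have := hconst (n • t) (nsmul_mem ht n)
      rw [succ_nsmul]
      push_cast
      linarith
  obtain ⟨M, hM⟩ := solF_bound hγ hΦ
  have hzero : solF γ Φ t - solF γ Φ 0 = 0 := by
    by_contra hcon
    obtain ⟨n, hn'⟩ := exists_nat_gt (2 * M / |solF γ Φ t - solF γ Φ 0|)
    rw [div_lt_iff₀ (abs_pos.2 hcon)] at hn'
    have h1 : |solF γ Φ (n • t) - solF γ Φ 0| = n * |solF γ Φ t - solF γ Φ 0| := by
      rw [hn, abs_mul, Nat.abs_cast]
    have h2 := abs_sub (solF γ Φ (n • t)) (solF γ Φ 0)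
    have h3 := hM (n • t)
    have h4 := hM 0
    rw [Real.norm_eq_abs] at h3 h4
    linarith
  have := hconst η hη
  rw [hzero, ht_def, add_sub_cancel] at this
  linarith

end SolF

/-! ### Analytic continuation in `x` -/

/-- `φ` extends from the real interval of radius `r` about `p` to a holomorphic function bounded by
`M` on the complex disc of radius `r`; the disc is recentred at `0`. -/
def HasExt (φ : ℝ → ℝ) (r M p : ℝ) : Prop :=
  ∃ g : ℂ → ℂ, DifferentiableOn ℂ g (Metric.ball 0 r) ∧ (∀ z ∈ Metric.ball (0 : ℂ) r, ‖g z‖ ≤ M) ∧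
    ∀ y : ℝ, |y| < r → g y = φ (p + y)

lemma HasExt.mono {φ : ℝ → ℝ} {r r' M M' p : ℝ} (h : HasExt φ r M p) (hr : r' ≤ r) (hM : M ≤ M') :
    HasExt φ r' M' p := by
  obtain ⟨g, hg, hb, he⟩ := h
  exact ⟨g, hg.mono (Metric.ball_subset_ball hr),
    fun z hz => (hb z (Metric.ball_subset_ball hr hz)).trans hM, fun y hy => he y (hy.trans_le hr)⟩

lemma HasExt.translate {φ : ℝ → ℝ} {r M p q : ℝ} (h : HasExt φ r M p) (hq : |q - p| < r / 2) :
    HasExt φ (r / 2) M q := by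
  obtain ⟨g, hg, hb, he⟩ := h
  have hmaps : MapsTo (fun z : ℂ => z + ((q - p : ℝ) : ℂ)) (Metric.ball 0 (r / 2))
      (Metric.ball 0 r) := by
    intro z hz
    rw [mem_ball_zero_iff] at hz ⊢
    calc ‖z + ((q - p : ℝ) : ℂ)‖ ≤ ‖z‖ + |q - p| := by
          simpa only [Complex.norm_real, Real.norm_eq_abs] using norm_add_le z ((q - p : ℝ) : ℂ)
      _ < r := by linarith
  refine ⟨fun z => g (z + ((q - p : ℝ) : ℂ)), hg.comp (by fun_prop) hmaps,
    fun z hz => hb _ (hmaps hz), fun y hy => ?_⟩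
  have h1 : |y + (q - p)| < r := (abs_add_le _ _).trans_lt (by linarith)
  have := he _ h1
  push_cast at this ⊢
  rw [this]
  congr 2
  ring

/-- The Taylor series at `p`, evaluated at complex arguments, converges normally on a disc of half
a radius within which its terms are bounded. -/
lemma exists_hasExt {φ : ℝ → ℝ} {p : ℝ} (h : AnalyticAt ℝ φ p) : ∃ r > 0, ∃ M, HasExt φ r M p := by
  obtain ⟨P, R, hP⟩ := h
  obtain ⟨ρ, hρ0, hρR⟩ := ENNReal.lt_iff_exists_nnreal_btwn.1 hP.r_pos
  have hρ : (0 : ℝ) < ρ := by exact_mod_cast hρ0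
  obtain ⟨C, hC, hCb⟩ := P.norm_mul_pow_le_of_lt_radius (hρR.trans_le hP.r_le)
  have hterm : ∀ (n : ℕ) (z : ℂ), z ∈ Metric.ball (0 : ℂ) (ρ / 2) →
      ‖(P.coeff n : ℂ) * z ^ n‖ ≤ C * (1 / 2) ^ n := by
    intro n z hz
    rw [mem_ball_zero_iff] at hz
    rw [norm_mul, norm_pow, Complex.norm_real]
    calc ‖P.coeff n‖ * ‖z‖ ^ n ≤ ‖P.coeff n‖ * (ρ / 2) ^ n := by gcongr
      _ = (‖P n‖ * ρ ^ n) * (1 / 2) ^ n := by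
          rw [P.norm_apply_eq_norm_coef, div_pow, div_pow, one_pow]; ring
      _ ≤ C * (1 / 2) ^ n := by gcongr; exact hCb n
  have hsum : Summable fun n : ℕ => C * (1 / 2 : ℝ) ^ n := summable_geometric_two.mul_left C
  refine ⟨ρ / 2, by positivity, _, fun z => ∑' n, (P.coeff n : ℂ) * z ^ n,
    Complex.differentiableOn_tsum_of_summable_norm hsum (fun n => by fun_prop) Metric.isOpen_ball
      hterm, fun z hz => tsum_of_norm_bounded hsum.hasSum fun n => hterm n z hz, fun y hy => ?_⟩
  have hy' : y ∈ Metric.eball (0 : ℝ) R := by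
    refine Metric.eball_subset_eball hρR.le ?_
    rw [Metric.eball_coe, mem_ball_zero_iff, Real.norm_eq_abs]
    linarith
  have hs := hP.hasSum hy'
  rw [← hs.tsum_eq, Complex.ofReal_tsum]
  refine tsum_congr fun n => ?_
  rw [P.apply_eq_pow_smul_coeff, smul_eq_mul]
  push_cast
  ring

/-- For periodic analytic `φ`, compactness of a period makes the radius and the bound uniform. -/
lemma exists_uniform_hasExt {φ : ℝ → ℝ} (hper : Function.Periodic φ 1)
    (hanal : ∀ x, AnalyticAt ℝ φ x) : ∃ r > 0, ∃ M, ∀ p, HasExt φ r M p := by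
  have key : ∃ r > 0, ∃ M, ∀ p ∈ Icc (0 : ℝ) 1, HasExt φ r M p := by
    refine isCompact_Icc.induction_on (p := fun s => ∃ r > 0, ∃ M, ∀ p ∈ s, HasExt φ r M p)
      ⟨1, one_pos, 0, by simp⟩ ?_ ?_ ?_
    · rintro s t hst ⟨r, hr, M, h⟩
      exact ⟨r, hr, M, fun p hp => h p (hst hp)⟩
    · rintro s t ⟨r, hr, M, h⟩ ⟨r', hr', M', h'⟩
      refine ⟨min r r', lt_min hr hr', max M M', ?_⟩
      rintro p (hp | hp)
      · exact (h p hp).mono (min_le_left _ _) (le_max_left _ _)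
      · exact (h' p hp).mono (min_le_right _ _) (le_max_right _ _)
    · intro p _
      obtain ⟨r, hr, M, h⟩ := exists_hasExt (hanal p)
      refine ⟨Metric.ball p (r / 2), mem_nhdsWithin_of_mem_nhds (Metric.ball_mem_nhds _ (by linarith)),
        r / 2, by linarith, M, fun q hq => h.translate ?_⟩
      rwa [Metric.mem_ball, Real.dist_eq] at hq
  obtain ⟨r, hr, M, h⟩ := key
  refine ⟨r, hr, M, fun p => ?_⟩
  obtain ⟨g, hg, hb, he⟩ := h (Int.fract p) ⟨Int.fract_nonneg p, (Int.fract_lt_one p).le⟩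
  refine ⟨g, hg, hb, fun y hy => ?_⟩
  rw [he y hy]
  congr 1
  have := hper.sub_int_mul_eq (x := p + y) ⌊p⌋
  rw [← this, Int.fract]
  congr 1
  ring

/-- Near `x`, `S(·, j)` is the restriction of a normally convergent series of holomorphic functions
on a disc; each term is the local extension of `φ` at `(x + j₁ + ⋯ + jₙ bⁿ⁻¹) / bⁿ`, rescaled. -/
lemma analyticAt_S {b : ℕ} (hb : 2 ≤ b) {γ : ℝ} (hγ : γ ∈ Ioo (0 : ℝ) 1) {φ : ℝ → ℝ}
    (hper : Function.Periodic φ 1) (hanal : ∀ x, AnalyticAt ℝ φ x) (j : ℕ → Fin b) (x : ℝ) :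
    AnalyticAt ℝ (fun x => S b γ φ x j) x := by
  obtain ⟨r, hr, M, h⟩ := exists_uniform_hasExt hper hanal
  choose g hg hgb hge using fun n : ℕ => h ((x + sval b j (n + 1)) / (b : ℝ) ^ (n + 1))
  have hb1 : ∀ n : ℕ, (1 : ℝ) ≤ (b : ℝ) ^ (n + 1) := fun n =>
    one_le_pow₀ (by exact_mod_cast (by omega : 1 ≤ b))
  have hmaps : ∀ n : ℕ, MapsTo (fun z : ℂ => z / (b : ℂ) ^ (n + 1)) (Metric.ball 0 r)
      (Metric.ball 0 r) := by
    intro n z hz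
    rw [mem_ball_zero_iff] at hz ⊢
    rw [norm_div, norm_pow, Complex.norm_natCast]
    exact (div_le_self (norm_nonneg z) (hb1 n)).trans_lt hz
  set G : ℂ → ℂ := fun z => ∑' n : ℕ, (γ : ℂ) ^ n * g n (z / (b : ℂ) ^ (n + 1)) with hG
  have hGd : DifferentiableOn ℂ G (Metric.ball 0 r) := by
    refine Complex.differentiableOn_tsum_of_summable_norm (summable_pow_mul hγ M)
      (fun n => ((hg n).comp (by fun_prop) (hmaps n)).const_mul _) Metric.isOpen_ball ?_
    intro n z hz
    rw [norm_mul, norm_pow, Complex.norm_real, Real.norm_of_nonneg hγ.1.le]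
    exact mul_le_mul_of_nonneg_left (hgb n _ (hmaps n hz)) (pow_nonneg hγ.1.le n)
  have hGa : AnalyticAt ℂ G ((0 : ℝ) : ℂ) :=
    hGd.analyticAt (by simpa using Metric.ball_mem_nhds (0 : ℂ) hr)
  have hre : AnalyticAt ℝ (fun y : ℝ => (G y).re) (x - x) := by
    rw [sub_self]; exact hGa.re_ofReal
  have hcomp := hre.fun_comp (f := fun y : ℝ => y - x) (by fun_prop)
  refine hcomp.congr ?_
  filter_upwards [Metric.ball_mem_nhds x hr] with y hy
  rw [Metric.mem_ball, Real.dist_eq] at hy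
  have hterm : ∀ n : ℕ, (γ : ℂ) ^ n * g n (((y - x : ℝ) : ℂ) / (b : ℂ) ^ (n + 1)) =
      ((γ ^ n * φ ((y + sval b j (n + 1)) / (b : ℝ) ^ (n + 1)) : ℝ) : ℂ) := by
    intro n
    have hlt : |(y - x) / (b : ℝ) ^ (n + 1)| < r := by
      rw [abs_div, abs_of_pos (zero_lt_one.trans_le (hb1 n))]
      exact (div_le_self (abs_nonneg _) (hb1 n)).trans_lt hy
    have := hge n _ hlt
    push_cast at this ⊢
    rw [this]
    congr 3
    ring
  simp only [hG, hterm]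
  rw [← Complex.ofReal_tsum, Complex.ofReal_re, S]

lemma S_eq_of_eqOn {b : ℕ} (hb : 2 ≤ b) {γ : ℝ} (hγ : γ ∈ Ioo (0 : ℝ) 1) {φ : ℝ → ℝ}
    (hper : Function.Periodic φ 1) (hanal : ∀ x, AnalyticAt ℝ φ x) {i j : ℕ → Fin b}
    (h : ∀ x ∈ Icc (0 : ℝ) 1, S b γ φ x i = S b γ φ x j) (x : ℝ) : S b γ φ x i = S b γ φ x j := by
  have hi : AnalyticOnNhd ℝ (fun x => S b γ φ x i) univ := fun x _ =>
    analyticAt_S hb hγ hper hanal i x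
  have hj : AnalyticOnNhd ℝ (fun x => S b γ φ x j) univ := fun x _ =>
    analyticAt_S hb hγ hper hanal j x
  have hev : (fun x => S b γ φ x i) =ᶠ[𝓝 (1 / 2)] fun x => S b γ φ x j := by
    filter_upwards [Icc_mem_nhds (show (0 : ℝ) < 1 / 2 by norm_num)
      (show (1 / 2 : ℝ) < 1 by norm_num)] with y hy
    exact h y hy
  exact congrFun (hi.eq_of_eventuallyEq hj hev) x

/-! ### From digit sequences to the solenoid -/

/-- The point of the solenoid attached to `(x, j)`: its `n`-th coordinate is
`(x + j₁ + ⋯ + jₙ bⁿ⁻¹) / bⁿ` modulo `1`. -/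
def toSol (b : ℕ) (x : ℝ) (j : ℕ → Fin b) : ℕ → UnitAddCircle :=
  fun n => (((x + sval b j n) / (b : ℝ) ^ n : ℝ) : UnitAddCircle)

/-- The one-parameter subgroup `x ↦ (x / bⁿ mod 1)ₙ` of the solenoid. -/
def line (b : ℕ) (x : ℝ) : ℕ → UnitAddCircle := fun n => ((x / (b : ℝ) ^ n : ℝ) : UnitAddCircle)

lemma coe_nat_eq_zero (n : ℕ) : (((n : ℕ) : ℝ) : UnitAddCircle) = 0 :=
  (AddCircle.coe_eq_zero_iff 1).2 ⟨n, by simp⟩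

lemma toSol_mem {b : ℕ} (hb : 2 ≤ b) (x : ℝ) (j : ℕ → Fin b) : toSol b x j ∈ solenoid b := by
  intro n
  have hb0 : (b : ℝ) ≠ 0 := by exact_mod_cast (by omega : b ≠ 0)
  have h1 : b • ((x + sval b j (n + 1)) / (b : ℝ) ^ (n + 1)) =
      (x + sval b j n) / (b : ℝ) ^ n + ((j n).val : ℕ) := by
    rw [sval, Finset.sum_range_succ, ← sval, nsmul_eq_mul]
    push_cast
    field_simp
    ring
  simp only [toSol]
  rw [← AddCircle.coe_nsmul, h1, AddCircle.coe_add, coe_nat_eq_zero, add_zero]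

lemma line_mem {b : ℕ} (hb : 2 ≤ b) (x : ℝ) : line b x ∈ solenoid b := by
  intro n
  have hb0 : (b : ℝ) ≠ 0 := by exact_mod_cast (by omega : b ≠ 0)
  simp only [line]
  rw [← AddCircle.coe_nsmul, nsmul_eq_mul]
  congr 1
  field_simp
  ring

lemma toSol_eq_add_line (b : ℕ) (x : ℝ) (j : ℕ → Fin b) : toSol b x j = toSol b 0 j + line b x := by
  funext n
  simp only [toSol, line, Pi.add_apply]
  rw [← AddCircle.coe_add]
  congr 1
  ring

lemma toSol_zero (b : ℕ) (x : ℝ) (j : ℕ → Fin b) : toSol b x j 0 = (x : UnitAddCircle) := by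
  simp [toSol, sval]

/-- Distinct digit sequences give distinct points: at the first index `k` where they differ, the
coordinates of index `k + 1` differ by `(jₖ - iₖ) / b`, which is not an integer. -/
lemma toSol_injective {b : ℕ} (hb : 2 ≤ b) {i j : ℕ → Fin b} (h : toSol b 0 i = toSol b 0 j) :
    i = j := by
  have hb0 : (b : ℝ) ≠ 0 := by exact_mod_cast (by omega : b ≠ 0)
  funext k
  induction k using Nat.strong_induction_on with
  | _ k ih =>
    have hs : sval b i k = sval b j k :=
      Finset.sum_congr rfl fun m hm => by rw [ih m (Finset.mem_range.1 hm)]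
    have hk := congrFun h (k + 1)
    simp only [toSol] at hk
    rw [← sub_eq_zero, ← AddCircle.coe_sub, AddCircle.coe_eq_zero_iff] at hk
    obtain ⟨m, hm⟩ := hk
    have hi : sval b i (k + 1) = sval b i k + (i k).val * b ^ k := Finset.sum_range_succ _ _
    have hj : sval b j (k + 1) = sval b j k + (j k).val * b ^ k := Finset.sum_range_succ _ _
    rw [hi, hj, hs] at hm
    have hm' : (m : ℝ) * b = (i k).val - (j k).val := by
      rw [zsmul_eq_mul, mul_one] at hm
      rw [hm]
      push_cast
      field_simp
      ring
    have hm2 : m * (b : ℤ) = (i k).val - (j k).val := by exact_mod_cast hm'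
    have hli := (i k).isLt
    have hlj := (j k).isLt
    have hm0 : m = 0 := by
      by_contra hne
      rcases lt_or_gt_of_ne hne with h0 | h0
      · have : m * (b : ℤ) ≤ -1 * b := mul_le_mul_of_nonneg_right (by omega) (by omega)
        omega
      · have : 1 * (b : ℤ) ≤ m * b := mul_le_mul_of_nonneg_right (by omega) (by omega)
        omega
    rw [hm0, zero_mul] at hm2
    exact Fin.ext (by omega)

/-- A coincidence `S(·, i) = S(·, j)` on `ℝ` for a single pair `i ≠ j` forces `S(x, ·)` to be
constant: it says that `F` has period `toSol 0 j - toSol 0 i` along a translate of the dense line,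
hence on the whole solenoid. -/
lemma S_const_of_eq {b : ℕ} (hb : 2 ≤ b) {γ : ℝ} (hγ : γ ∈ Ioo (0 : ℝ) 1) {φ : ℝ → ℝ}
    (hper : Function.Periodic φ 1) (hcont : Continuous φ) {i j : ℕ → Fin b} (hij : i ≠ j)
    (h : ∀ x, S b γ φ x i = S b γ φ x j) (k l : ℕ → Fin b) (x : ℝ) :
    S b γ φ x k = S b γ φ x l := by
  have hb0 : (b : ℝ) ≠ 0 := by exact_mod_cast (by omega : b ≠ 0)
  set Φ : UnitAddCircle → ℝ := hper.lift with hΦdef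
  have hΦ : Continuous Φ := continuous_coinduced_dom.mpr hcont
  have hS : ∀ x j, S b γ φ x j = solF γ Φ (toSol b x j) := fun x j => rfl
  set d := toSol b 0 j - toSol b 0 i with hd
  have hdmem : d ∈ solenoid b := sub_mem (toSol_mem hb 0 j) (toSol_mem hb 0 i)
  have hsub : (solenoid b : Set (ℕ → UnitAddCircle)) ⊆
      {s | solF γ Φ (s + d) = solF γ Φ s} := by
    have hF := continuous_solF hγ hΦ
    refine solenoid_subset_of_closed (isClosed_eq (by fun_prop) hF) fun n c => ?_
    obtain ⟨y, hy⟩ := QuotientAddGroup.mk_surjective (c - toSol b 0 i n)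
    -- on `toSol 0 i + line x` the `n`-th coordinate takes the value `c` at `x = bⁿ y`
    refine ⟨toSol b (b ^ n * y) i, ?_, toSol_mem hb _ _, ?_⟩
    · have : toSol b (b ^ n * y) i + d = toSol b (b ^ n * y) j := by
        rw [toSol_eq_add_line, toSol_eq_add_line b _ j, hd]
        abel
      rw [mem_ofPred_eq, this, ← hS, ← hS, h]
    · have : line b (b ^ n * y) n = c - toSol b 0 i n := by
        rw [← hy, line, mul_div_cancel_left₀ _ (pow_ne_zero n hb0)]
      rw [toSol_eq_add_line, Pi.add_apply, this, add_sub_cancel]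
  rw [hS, hS]
  refine solF_eq_of_period hγ hΦ hdmem (by simp [hd, toSol_zero]) ?_ (fun s hs => hsub hs)
    (toSol_mem hb x k) (toSol_mem hb x l) (by rw [toSol_zero, toSol_zero])
  intro h0
  exact hij (toSol_injective hb (sub_eq_zero.1 h0).symm)

/-- Dichotomy between conditions (H*) and (H) for real analytic `ℤ`-periodic `φ`. -/
theorem dichotomy_H_Hstar (b : ℕ) (hb : 2 ≤ b) (γ : ℝ) (hγ : γ ∈ Ioo (0 : ℝ) 1)
    (φ : ℝ → ℝ) (hper : ∀ x : ℝ, φ (x + 1) = φ x) (hanal : ∀ x : ℝ, AnalyticAt ℝ φ x) :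
    Xor' (CondHstar b γ φ) (CondH b γ φ) := by
  have hcont : Continuous φ := continuous_iff_continuousAt.2 fun x => (hanal x).continuousAt
  refine xor_iff_iff_not.2 ⟨?_, ?_⟩
  · intro hstar hH
    have hne : (fun _ : ℕ => (⟨0, by omega⟩ : Fin b)) ≠ fun _ => ⟨1, by omega⟩ := fun h => by
      simpa using congrFun h 0
    obtain ⟨x, hx, hxne⟩ := hH _ _ hne
    exact hxne (hstar _ _ x hx)
  · intro hH
    simp only [CondH, not_forall, not_exists, not_and, not_not] at hH
    obtain ⟨i, j, hij, h⟩ := hH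
    exact fun k l x _ => S_const_of_eq hb hγ hper hcont hij (S_eq_of_eqOn hb hγ hper hanal h) k l x

end
end Skew
end

section
/- Let b ≥ 2 be an integer, γ ∈ (0,1), and let φ : ℝ → ℝ be a ℤ-periodic Lipschitz function. Then: (1) the SRB measure ω is exact dimensional; (2) there is a constant α ∈ [0,1] such that for Lebesgue-a.e. x ∈ [0,1] the measure m_x is exact dimensional with dim(m_x) = α; and (3) dim(ω) = 1 + α. -/
/-!
The proof follows the ergodic map `T(x, j) = ((x + j₁) / b, σ j)` on `[0,1) × Σ` (`skewT`), where `σ`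
is the shift. It preserves `Leb × ν`, and it is mixing, hence ergodic, because the points
`(x + v) / b ^ n` with `0 ≤ v < b ^ n` equidistribute in `[0,1)` (`ergodic_skewT`).

The series defining `S` gives `S(x, j) = φ(x') + γ S(x', σ j)` with `(x', σ j) = T(x, j)`. So, within
the cylinder of sequences with first letter `j₁`, the ball of radius `γ r` around `S(x, j)` is a copy
of the ball of radius `r` around `S(T(x, j))` (`cylinder_inter_ball`). Writing `d n (x, j)` for the
`m_x`-measure of the ball of radius `R γ ^ n` around `S(x, j)`, the ratio
`b⁻¹ d n (T p) / d (n + 1) p` is the proportion of that ball which comes from the cylinder. By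
Besicovitch differentiation these proportions converge almost everywhere (`ae_tendsto_ratio`), and by
the Besicovitch covering theorem the set where one of them is below `c` has measure `O(c)`
(`measure_small_ratio_le`); hence the supremum of minus their logarithms is integrable. The quantity
`-log (d n p)` is `n log b` minus a sum of such logarithmic losses along the orbit of `p`, in which
the observable depends on the remaining time. Maker's extension of Birkhoff's theorem (`maker`)
shows that `-log (d n p) / n` converges almost everywhere to a constant `h` (`local_entropy`,
`entropy_S`).

Interpolating between the scales `R γ ^ n` (`tendsto_of_geometric`), almost every `m_x` is exact
dimensional with dimension `α = h / (-log γ)`. It is at most `1` because Lebesgue measure has an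
almost everywhere finite density with respect to any finite measure on the line (`localDim_le_one`).

Finally, `S` is Lipschitz in `x`, with a constant `L`, so that up to multiplicative constants
`ω(B((x, y), r))` lies between `r m_x(B(y, r / 2))` and `r m_x(B(y, (1 + L) r))`
(`le_srb_closedBall`, `srb_closedBall_le`). Hence `ω` has local dimension `1 + α` at almost every
point.
-/

open MeasureTheory Set Filter
open scoped ENNReal NNReal Topology

namespace Skew

noncomputable section

variable (b : ℕ) (γ : ℝ) (φ : ℝ → ℝ)

/-! ### Ergodic theorems -/

/-- Birkhoff sums of a function of negative mean are almost everywhere bounded above. The set where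
they are bounded is invariant; if it were null, the maximum `M n` of `0` and the first `n` sums would
satisfy `M (n + 1) - M n ∘ T → f` almost everywhere, whereas `∫ (M (n + 1) - M n ∘ T) ≥ 0`. -/
theorem birkhoff_bddAbove {X : Type*} [MeasurableSpace X] {μ : Measure X}
    [IsProbabilityMeasure μ] {T : X → X} (hT : Ergodic T μ) {f : X → ℝ} (hf : Measurable f)
    (hi : Integrable f μ) (hneg : ∫ x, f x ∂μ < 0) :
    ∀ᵐ x ∂μ, BddAbove (range fun n => birkhoffSum T f n x) := by
  have hTm := hT.toMeasurePreserving.measurable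
  have hSm : ∀ n, Measurable (fun x => birkhoffSum T f n x) := by
    intro n
    unfold birkhoffSum
    exact Finset.measurable_sum _ fun i _ => hf.comp (hTm.iterate i)
  set A : Set X := {x | BddAbove (range fun n => birkhoffSum T f n x)} with hA
  have hAm : MeasurableSet A := measurableSet_bddAbove_range hSm
  have hinv : T ⁻¹' A = A := by
    ext x
    simp only [mem_preimage, hA, mem_ofPred_eq]
    constructor
    · rintro ⟨C, hC⟩
      refine ⟨max 0 (f x + C), ?_⟩
      rintro _ ⟨n, rfl⟩
      cases n with
      | zero => simp
      | succ n =>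
        simp only [birkhoffSum_succ']
        exact le_max_of_le_right (by linarith [hC ⟨n, rfl⟩])
    · rintro ⟨C, hC⟩
      refine ⟨C - f x, ?_⟩
      rintro _ ⟨n, rfl⟩
      have := hC ⟨n + 1, rfl⟩
      simp only [birkhoffSum_succ'] at this
      linarith
  rcases hT.toPreErgodic.ae_mem_or_ae_notMem hAm hinv with h | h
  · exact h
  exfalso
  -- `M n` is the maximum of `0` and the first `n` Birkhoff sums.
  let M : ℕ → X → ℝ := fun n => Nat.rec (fun _ => 0) (fun _ m x => max 0 (f x + m (T x))) n
  have hMs : ∀ n x, M (n + 1) x = max 0 (f x + M n (T x)) := fun _ _ => rfl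
  have hM0 : ∀ n x, 0 ≤ M n x := by
    intro n x
    cases n with
    | zero => exact le_refl _
    | succ n => rw [hMs]; exact le_max_left _ _
  have hMmono : ∀ n x, M n x ≤ M (n + 1) x := by
    intro n
    induction n with
    | zero => intro x; exact hM0 1 x
    | succ n ih =>
      intro x
      rw [hMs, hMs (n + 1)]
      exact max_le_max le_rfl (by linarith [ih (T x)])
  have hMge : ∀ n x, birkhoffSum T f n x ≤ M n x := by
    intro n
    induction n with
    | zero => intro x; simp [hM0]
    | succ n ih =>
      intro x
      rw [hMs, birkhoffSum_succ']
      exact le_max_of_le_right (by linarith [ih (T x)])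
  have hMi : ∀ n, Integrable (M n) μ := by
    intro n
    induction n with
    | zero => exact integrable_zero _ _ _
    | succ n ih =>
      have h1 : Integrable (fun x => f x + M n (T x)) μ :=
        hi.add (hT.toMeasurePreserving.integrable_comp_of_integrable ih)
      exact (integrable_zero X ℝ μ).sup h1
  have hMm : ∀ n, Measurable (M n) := by
    intro n
    induction n with
    | zero => exact measurable_const
    | succ n ih => exact measurable_const.max (hf.add (ih.comp hTm))
  have hMmono' : ∀ x, Monotone (fun n => M n x) := fun x => monotone_nat_of_le_succ (hMmono · x)
  have hnn : ∀ n, 0 ≤ ∫ x, (M (n + 1) x - M n (T x)) ∂μ := by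
    intro n
    have hcomp : Integrable (fun x => M n (T x)) μ :=
      hT.toMeasurePreserving.integrable_comp_of_integrable (hMi n)
    rw [integral_sub (hMi (n + 1)) hcomp]
    have h1 : ∫ x, M n (T x) ∂μ = ∫ x, M n x ∂μ := by
      conv_rhs => rw [← hT.toMeasurePreserving.map_eq]
      rw [integral_map hTm.aemeasurable (hMm n).aestronglyMeasurable]
    rw [h1]
    exact sub_nonneg.2 (integral_mono (hMi n) (hMi (n + 1)) (hMmono n))
  have hdct : Tendsto (fun n => ∫ x, (M (n + 1) x - M n (T x)) ∂μ) atTop (𝓝 (∫ x, f x ∂μ)) := by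
    refine tendsto_integral_of_dominated_convergence (fun x => |f x|) ?_ hi.abs ?_ ?_
    · intro n
      have hm : Measurable (fun x => M (n + 1) x - M n (T x)) := (hMm (n + 1)).sub ((hMm n).comp hTm)
      exact hm.aestronglyMeasurable
    · intro n
      refine Eventually.of_forall fun x => ?_
      rw [hMs, Real.norm_eq_abs, abs_le]
      have := hM0 n (T x)
      constructor
      · have := le_max_right 0 (f x + M n (T x))
        linarith [neg_abs_le (f x)]
      · have : max 0 (f x + M n (T x)) ≤ |f x| + M n (T x) :=
          max_le (by positivity) (by linarith [le_abs_self (f x)])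
        linarith
    · filter_upwards [h] with x hx
      have hx' : T x ∉ A := fun h' => hx (by rw [← hinv]; exact h')
      have : ∃ n, -f x < M n (T x) := by
        refine Classical.by_contradiction fun hcon => hx' ⟨-f x, ?_⟩
        rintro _ ⟨n, rfl⟩
        exact (hMge n _).trans (not_lt.1 fun h => hcon ⟨n, h⟩)
      obtain ⟨n, hn⟩ := this
      refine tendsto_const_nhds.congr' ?_
      filter_upwards [eventually_ge_atTop n] with m hm
      rw [hMs, max_eq_right]
      · ring
      · linarith [hMmono' (T x) hm]
  exact absurd (ge_of_tendsto' hdct hnn) (not_le.2 hneg)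

/-- The upper half of Birkhoff's theorem: sums of `f - ∫ f - ε` are bounded above. -/
theorem birkhoff_upper {X : Type*} [MeasurableSpace X] {μ : Measure X}
    [IsProbabilityMeasure μ] {T : X → X} (hT : Ergodic T μ) {f : X → ℝ} (hf : Measurable f)
    (hi : Integrable f μ) :
    ∀ᵐ x ∂μ, ∀ ε > 0, ∀ᶠ n : ℕ in atTop, birkhoffSum T f n x / n ≤ ∫ y, f y ∂μ + ε := by
  have key : ∀ᵐ x ∂μ, ∀ k : ℕ, BddAbove (range fun n =>
      birkhoffSum T (fun y => f y - (∫ y, f y ∂μ + 1 / ((k : ℝ) + 1))) n x) := by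
    rw [ae_all_iff]
    intro k
    refine birkhoff_bddAbove hT (hf.sub_const _) (hi.sub (integrable_const _)) ?_
    rw [integral_sub hi (integrable_const _)]
    simp
    positivity
  filter_upwards [key] with x hx ε hε
  obtain ⟨k, hk⟩ := exists_nat_one_div_lt (half_pos hε)
  obtain ⟨C, hC⟩ := hx k
  have h1 : Tendsto (fun n : ℕ => C / (n : ℝ)) atTop (𝓝 0) := tendsto_const_div_atTop_nhds_zero_nat C
  filter_upwards [h1.eventually (gt_mem_nhds (half_pos hε)), eventually_gt_atTop 0] with n hn hn0
  have hn0' : (0 : ℝ) < n := by exact_mod_cast hn0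
  have h2 := hC ⟨n, rfl⟩
  simp only [birkhoffSum, Finset.sum_sub_distrib, Finset.sum_const, Finset.card_range,
    nsmul_eq_mul] at h2
  rw [div_lt_iff₀ hn0'] at hn
  rw [div_le_iff₀ hn0', birkhoffSum]
  nlinarith

/-- **Birkhoff's pointwise ergodic theorem** for an ergodic transformation. -/
theorem birkhoff {X : Type*} [MeasurableSpace X] {μ : Measure X}
    [IsProbabilityMeasure μ] {T : X → X} (hT : Ergodic T μ) {f : X → ℝ} (hf : Measurable f)
    (hi : Integrable f μ) :
    ∀ᵐ x ∂μ, Tendsto (fun n : ℕ => birkhoffSum T f n x / n) atTop (𝓝 (∫ y, f y ∂μ)) := by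
  filter_upwards [birkhoff_upper hT hf hi, birkhoff_upper hT hf.neg hi.neg] with x h1 h2
  rw [Metric.tendsto_atTop']
  intro ε hε
  obtain ⟨N, hN⟩ := eventually_atTop.1
    ((h1 (ε / 2) (half_pos hε)).and (h2 (ε / 2) (half_pos hε)))
  refine ⟨N, fun n hn => ?_⟩
  obtain ⟨h3, h4⟩ := hN n hn.le
  have h5 : birkhoffSum T (-f) n x = - birkhoffSum T f n x := by simp [birkhoffSum]
  simp only [h5, Pi.neg_apply, integral_neg, neg_div] at h4
  rw [Real.dist_eq, abs_lt]
  constructor <;> linarith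

/-- **Maker's ergodic theorem**: Birkhoff averages in which the observable changes along the
orbit, through a dominated, almost everywhere convergent sequence `g`. -/
theorem maker {X : Type*} [MeasurableSpace X] {μ : Measure X}
    [IsProbabilityMeasure μ] {T : X → X} (hT : Ergodic T μ) {g : ℕ → X → ℝ} {G : X → ℝ}
    (hgm : ∀ n, Measurable (g n)) (hGi : Integrable G μ)
    (hbd : ∀ᵐ x ∂μ, ∀ n, |g n x| ≤ G x)
    (hlim : ∀ᵐ x ∂μ, ∃ l : ℝ, Tendsto (fun n => g n x) atTop (𝓝 l)) :
    ∃ c : ℝ, ∀ᵐ x ∂μ, Tendsto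
      (fun n : ℕ => (∑ k ∈ Finset.range n, g (n - k) (T^[k] x)) / n) atTop (𝓝 c) := by
  obtain ⟨f, hfm, hf⟩ := measurable_limit_of_tendsto_metrizable_ae
    (fun n => (hgm n).aemeasurable) hlim
  have hfG : ∀ᵐ x ∂μ, |f x| ≤ G x := by
    filter_upwards [hf, hbd] with x h1 h2
    exact le_of_tendsto' h1.abs h2
  have hfi : Integrable f μ := hGi.mono' hfm.aestronglyMeasurable hfG
  -- `H M` is the worst deviation from the limit `f` among the indices `≥ M`.
  let H : ℕ → X → ℝ := fun M x => ⨆ n, |g (M + n) x - f x|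
  have hHm : ∀ M, Measurable (H M) := fun M =>
    Measurable.iSup fun n => (((hgm _).sub hfm).abs)
  have hdev : ∀ᵐ x ∂μ, ∀ n, |g n x - f x| ≤ 2 * G x := by
    filter_upwards [hbd, hfG] with x h1 h2 n
    have := abs_sub (g n x) (f x)
    linarith [h1 n]
  have hH0 : ∀ M x, 0 ≤ H M x := fun M x => Real.iSup_nonneg fun n => abs_nonneg _
  have hHle : ∀ᵐ x ∂μ, ∀ M, H M x ≤ 2 * G x := by
    filter_upwards [hdev] with x h1 M
    exact ciSup_le fun n => h1 _
  have hHge : ∀ᵐ x ∂μ, ∀ M n, M ≤ n → |g n x - f x| ≤ H M x := by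
    filter_upwards [hdev] with x h1 M n hn
    have hb : BddAbove (range fun n => |g (M + n) x - f x|) :=
      ⟨2 * G x, by rintro _ ⟨n, rfl⟩; exact h1 _⟩
    have := le_ciSup hb (n - M)
    simpa [Nat.add_sub_cancel' hn] using this
  have hHi : ∀ M, Integrable (H M) μ := by
    intro M
    refine (hGi.const_mul 2).mono' (hHm M).aestronglyMeasurable ?_
    filter_upwards [hHle] with x hx
    rw [Real.norm_eq_abs, abs_of_nonneg (hH0 M x)]
    exact hx M
  have hHt : Tendsto (fun M => ∫ x, H M x ∂μ) atTop (𝓝 0) := by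
    rw [← integral_zero X ℝ (μ := μ)]
    refine tendsto_integral_of_dominated_convergence (fun x => 2 * G x)
      (fun M => (hHm M).aestronglyMeasurable) (hGi.const_mul 2) ?_ ?_
    · intro M
      filter_upwards [hHle] with x hx
      rw [Real.norm_eq_abs, abs_of_nonneg (hH0 M x)]
      exact hx M
    · filter_upwards [hf] with x hx
      rw [Metric.tendsto_atTop] at hx ⊢
      intro ε hε
      obtain ⟨N, hN⟩ := hx (ε / 2) (half_pos hε)
      refine ⟨N, fun M hM => ?_⟩
      rw [Real.dist_eq, sub_zero, abs_of_nonneg (hH0 M x)]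
      have : H M x ≤ ε / 2 := ciSup_le fun n => by
        have := hN (M + n) (by omega)
        rw [Real.dist_eq] at this
        exact this.le
      linarith
  refine ⟨∫ x, f x ∂μ, ?_⟩
  have horb : ∀ᵐ x ∂μ, ∀ k M n, M ≤ n → |g n (T^[k] x) - f (T^[k] x)| ≤ H M (T^[k] x) := by
    rw [ae_all_iff]
    intro k
    exact (hT.toMeasurePreserving.iterate k).quasiMeasurePreserving.ae hHge
  have hBH : ∀ᵐ x ∂μ, ∀ M, Tendsto (fun n : ℕ => birkhoffSum T (H M) n x / n) atTop
      (𝓝 (∫ y, H M y ∂μ)) := by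
    rw [ae_all_iff]
    exact fun M => birkhoff hT (hHm M) (hHi M)
  filter_upwards [horb, hBH, birkhoff hT hfm hfi] with x h1 h2 h3
  have hdiff : Tendsto (fun n : ℕ => (∑ k ∈ Finset.range n, g (n - k) (T^[k] x)) / n
      - birkhoffSum T f n x / n) atTop (𝓝 0) := by
    rw [Metric.tendsto_atTop']
    intro ε hε
    obtain ⟨M, hM⟩ := (hHt.eventually (gt_mem_nhds (half_pos hε))).exists
    have hratio : Tendsto (fun m : ℕ => (m : ℝ) / ((m + M : ℕ) : ℝ)) atTop (𝓝 1) := by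
      simpa using tendsto_natCast_div_add_atTop (𝕜 := ℝ) (M : ℝ)
    have hsub : ∀ M', Tendsto (fun m : ℕ => birkhoffSum T (H M') m x / ((m + M : ℕ) : ℝ)) atTop
        (𝓝 (∫ y, H M' y ∂μ)) := by
      intro M'
      have := (h2 M').mul hratio
      rw [mul_one] at this
      refine this.congr' ?_
      filter_upwards [eventually_gt_atTop 0] with m hm
      have : (m : ℝ) ≠ 0 := by exact_mod_cast hm.ne'
      field_simp
    have hsh : Tendsto (fun m : ℕ => birkhoffSum T (H 0) (m + M) x / ((m + M : ℕ) : ℝ)) atTop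
        (𝓝 (∫ y, H 0 y ∂μ)) := (h2 0).comp (tendsto_add_atTop_nat M)
    -- For a time `n = m + M`, the first `m` terms deviate from `f` by at most `H M`; the other `M`
    -- terms are bounded by a block of the Birkhoff sum of `H 0`, negligible by Birkhoff's theorem.
    have htot := (hsub M).add (hsh.sub (hsub 0))
    rw [sub_self, add_zero] at htot
    obtain ⟨N, hN⟩ := eventually_atTop.1 (htot.eventually (gt_mem_nhds hM))
    refine ⟨N + M, fun n hn => ?_⟩
    obtain ⟨m, rfl⟩ : ∃ m, n = m + M := ⟨n - M, by omega⟩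
    have hNm := hN m (by omega)
    have hpos : (0 : ℝ) < ((m + M : ℕ) : ℝ) := by exact_mod_cast (by omega : 0 < m + M)
    rw [Real.dist_eq, sub_zero, ← sub_div, abs_div, abs_of_pos hpos]
    refine lt_of_le_of_lt ?_ (hNm.trans (half_lt_self hε))
    rw [← sub_div, ← add_div]
    refine div_le_div_of_nonneg_right ?_ hpos.le
    have e1 : ∑ k ∈ Finset.range (m + M), g (m + M - k) (T^[k] x) - birkhoffSum T f (m + M) x
        = ∑ k ∈ Finset.range (m + M), (g (m + M - k) (T^[k] x) - f (T^[k] x)) := by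
      rw [Finset.sum_sub_distrib]; rfl
    rw [e1]
    refine (Finset.abs_sum_le_sum_abs _ _).trans ?_
    have e2 : birkhoffSum T (H 0) (m + M) x - birkhoffSum T (H 0) m x
        = ∑ k ∈ Finset.range M, H 0 (T^[m + k] x) := by
      simp only [birkhoffSum, Finset.sum_range_add]; ring
    rw [e2, Finset.sum_range_add]
    refine add_le_add (Finset.sum_le_sum fun k hk => ?_) (Finset.sum_le_sum fun k hk => ?_)
    · exact h1 k M _ (by have := Finset.mem_range.1 hk; omega)
    · exact h1 _ 0 _ (Nat.zero_le _)
  simpa using hdiff.add h3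

/-! ### Differentiation and covering for measures on the line -/

/-- Weak-type maximal inequality for pairs of measures on the line, with the constant `N` given
by the Besicovitch covering theorem: the points around which some ball satisfies `μ' B ≤ c * μ B`
form a set of small `μ'`-measure. -/
theorem exists_maximal_const : ∃ N : ℕ, ∀ (μ μ' : Measure ℝ) (c : ℝ≥0∞) (R : ℝ) (A : Set ℝ),
    (∀ y ∈ A, ∃ r, 0 < r ∧ r ≤ R ∧
      μ' (Metric.closedBall y r) ≤ c * μ (Metric.closedBall y r)) →
    μ' A ≤ N * (c * μ univ) := by
  obtain ⟨N, τ, hτ, hN⟩ := HasBesicovitchCovering.no_satelliteConfig (α := ℝ)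
  refine ⟨N, fun μ μ' c R A hA => ?_⟩
  choose! r hr0 hrR hr using hA
  let q : Besicovitch.BallPackage A ℝ :=
    { c := fun y => y
      r := fun y => r y
      rpos := fun y => hr0 y y.2
      r_bound := R
      r_le := fun y => hrR y y.2 }
  obtain ⟨s, hs, hcov⟩ := Besicovitch.exist_disjoint_covering_families hτ hN q
  have hcount : ∀ i, (s i).Countable := by
    intro i
    refine (hs i).countable_of_nonempty_interior fun y _ => ?_
    refine ⟨q.c y, ?_⟩
    exact Metric.ball_subset_interior_closedBall (Metric.mem_ball_self (q.rpos y))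
  have hAsub : A ⊆ ⋃ i : Fin N, ⋃ y ∈ s i, Metric.closedBall (q.c y) (q.r y) := by
    intro y hy
    have : y ∈ range q.c := ⟨⟨y, hy⟩, rfl⟩
    have h := hcov this
    simp only [mem_iUnion] at h ⊢
    obtain ⟨i, z, hz, h⟩ := h
    exact ⟨i, z, hz, Metric.ball_subset_closedBall h⟩
  calc μ' A ≤ μ' (⋃ i : Fin N, ⋃ y ∈ s i, Metric.closedBall (q.c y) (q.r y)) := measure_mono hAsub
    _ ≤ ∑ i : Fin N, μ' (⋃ y ∈ s i, Metric.closedBall (q.c y) (q.r y)) :=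
        measure_iUnion_fintype_le _ _
    _ ≤ ∑ i : Fin N, c * μ univ := by
        refine Finset.sum_le_sum fun i _ => ?_
        have := (hcount i).to_subtype
        calc μ' (⋃ y ∈ s i, Metric.closedBall (q.c y) (q.r y))
            ≤ ∑' y : s i, μ' (Metric.closedBall (q.c y) (q.r y)) :=
              measure_biUnion_le _ (hcount i) _
          _ ≤ ∑' y : s i, c * μ (Metric.closedBall (q.c y) (q.r y)) :=
              ENNReal.tsum_le_tsum fun y => hr _ y.1.2
          _ = c * μ (⋃ y ∈ s i, Metric.closedBall (q.c y) (q.r y)) := by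
              rw [ENNReal.tsum_mul_left,
                measure_biUnion (hcount i) (hs i) fun y _ => Metric.isClosed_closedBall.measurableSet]
          _ ≤ c * μ univ := by gcongr; exact subset_univ _
    _ = N * (c * μ univ) := by simp

/-- Almost every point lies in the topological support: this is the maximal inequality with `c = 0`,
applied to the points whose ball of radius `r n` is null. -/
theorem ae_closedBall_pos (μ : Measure ℝ) [IsFiniteMeasure μ] {r : ℕ → ℝ} (hr : ∀ n, 0 < r n) :
    ∀ᵐ y ∂μ, ∀ n, 0 < μ (Metric.closedBall y (r n)) := by
  obtain ⟨N, hN⟩ := exists_maximal_const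
  rw [ae_all_iff]
  intro n
  have := hN μ μ 0 (r n) {y | ¬ 0 < μ (Metric.closedBall y (r n))} (fun y hy =>
    ⟨r n, hr n, le_rfl, by simpa using hy⟩)
  rw [ae_iff]
  simpa using this

/-- The proportion of a ball, seen through `h`, that is carried by `C` converges almost everywhere:
this is the Besicovitch differentiation theorem for the image under `h` of the restriction to `C`. -/
theorem ae_tendsto_ratio {Ω : Type*} [MeasurableSpace Ω] (ν : Measure Ω) [IsProbabilityMeasure ν]
    {h : Ω → ℝ} (hh : Measurable h) (C : Set Ω) :
    ∀ᵐ ω ∂ν, ∃ l : ℝ≥0∞, l < ∞ ∧ Tendsto (fun r =>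
      ν (C ∩ h ⁻¹' Metric.closedBall (h ω) r) / ν (h ⁻¹' Metric.closedBall (h ω) r))
      (𝓝[>] 0) (𝓝 l) := by
  have hp : IsProbabilityMeasure (ν.map h) := Measure.isProbabilityMeasure_map hh.aemeasurable
  have h1 := Besicovitch.ae_tendsto_rnDeriv ((ν.restrict C).map h) (ν.map h)
  have h2 := ((ν.restrict C).map h).rnDeriv_lt_top (ν.map h)
  filter_upwards [ae_of_ae_map hh.aemeasurable h1, ae_of_ae_map hh.aemeasurable h2] with ω h3 h4
  refine ⟨_, h4, h3.congr fun r => ?_⟩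
  rw [Measure.map_apply hh Metric.isClosed_closedBall.measurableSet,
    Measure.map_apply hh Metric.isClosed_closedBall.measurableSet,
    Measure.restrict_apply (hh Metric.isClosed_closedBall.measurableSet), inter_comm]

/-- The maximal inequality read through `h`: the points of `C` around which `C` carries only a small
proportion of some ball form a small set. -/
theorem measure_small_ratio_le {N : ℕ} (hN : ∀ (μ μ' : Measure ℝ) (c : ℝ≥0∞) (R : ℝ) (A : Set ℝ),
    (∀ y ∈ A, ∃ r, 0 < r ∧ r ≤ R ∧
      μ' (Metric.closedBall y r) ≤ c * μ (Metric.closedBall y r)) →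
    μ' A ≤ N * (c * μ univ))
    {Ω : Type*} [MeasurableSpace Ω] (ν : Measure Ω) [IsProbabilityMeasure ν]
    {h : Ω → ℝ} (hh : Measurable h) (C : Set Ω) (c : ℝ≥0∞)
    {r : ℕ → ℝ} (hr : ∀ n, 0 < r n) {R : ℝ} (hR : ∀ n, r n ≤ R) :
    ν {ω | ω ∈ C ∧ ∃ n, ν (C ∩ h ⁻¹' Metric.closedBall (h ω) (r n)) ≤
      c * ν (h ⁻¹' Metric.closedBall (h ω) (r n))} ≤ N * c := by
  have hp : IsProbabilityMeasure (ν.map h) := Measure.isProbabilityMeasure_map hh.aemeasurable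
  set A : Set ℝ := {y | ∃ n, (ν.restrict C).map h (Metric.closedBall y (r n)) ≤
    c * ν.map h (Metric.closedBall y (r n))} with hA
  have key := hN (ν.map h) ((ν.restrict C).map h) c R A (fun y ⟨n, hn⟩ => ⟨r n, hr n, hR n, hn⟩)
  rw [measure_univ, mul_one] at key
  refine le_trans ?_ key
  refine le_trans ?_ (Measure.le_map_apply hh.aemeasurable A)
  refine le_trans ?_ (Measure.le_restrict_apply _ _)
  refine measure_mono ?_
  rintro ω ⟨h1, n, hn⟩
  refine ⟨⟨n, ?_⟩, h1⟩
  rw [Measure.map_apply hh Metric.isClosed_closedBall.measurableSet,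
    Measure.map_apply hh Metric.isClosed_closedBall.measurableSet,
    Measure.restrict_apply (hh Metric.isClosed_closedBall.measurableSet), inter_comm]
  exact hn

/-- The almost everywhere local dimension of a measure on the line is at most `1`: the density of
Lebesgue measure with respect to it is almost everywhere finite, so that `r` is bounded by a
constant multiple of the measure of the ball of radius `r`. -/
theorem localDim_le_one (μ : Measure ℝ) [IsFiniteMeasure μ] {α : ℝ}
    (h : ∀ᵐ z ∂μ, Tendsto (fun r : ℝ =>
      Real.log (μ (Metric.closedBall z r)).toReal / Real.log r) (𝓝[>] 0) (𝓝 α))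
    (hμ : μ ≠ 0) : α ≤ 1 := by
  have h1 := Besicovitch.ae_tendsto_rnDeriv (volume : Measure ℝ) μ
  have h2 := (volume : Measure ℝ).rnDeriv_lt_top μ
  have : (ae μ).NeBot := ae_neBot.2 hμ
  obtain ⟨z, hz, h1, h2⟩ := (h.and (h1.and h2)).exists
  obtain ⟨c, hc1, hc2⟩ := exists_between h2
  -- `c` is a finite bound for the density, hence for the ratios `2 r / μ (B(z, r))` at small `r`.
  have hev := h1.eventually (gt_mem_nhds hc1)
  have hc0 : c ≠ 0 := (bot_le.trans_lt hc1).ne'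
  have hct : 0 < c.toReal := ENNReal.toReal_pos hc0 hc2.ne
  have hlog : Tendsto Real.log (𝓝[>] 0) atBot := Real.tendsto_log_nhdsGT_zero
  have hlim : Tendsto (fun r : ℝ => 1 + (Real.log 2 - Real.log c.toReal) / Real.log r) (𝓝[>] 0)
      (𝓝 (1 + 0)) := tendsto_const_nhds.add (hlog.const_div_atBot _)
  rw [add_zero] at hlim
  refine le_of_tendsto_of_tendsto hz hlim ?_
  filter_upwards [hev, self_mem_nhdsWithin, Ioo_mem_nhdsGT (zero_lt_one)] with r h3 h4 h5
  have hr0 : (0 : ℝ) < r := h4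
  have hlr : Real.log r < 0 := Real.log_neg hr0 h5.2
  rw [Real.volume_closedBall] at h3
  have hm0 : μ (Metric.closedBall z r) ≠ 0 := by
    intro h0
    rw [h0, ENNReal.div_zero (by simpa using hr0)] at h3
    exact not_top_lt h3
  have h6 : ENNReal.ofReal (2 * r) ≤ c * μ (Metric.closedBall z r) := by
    exact (ENNReal.div_le_iff hm0 (measure_ne_top _ _)).1 h3.le
  have h7 := ENNReal.toReal_mono (ENNReal.mul_ne_top hc2.ne (measure_ne_top _ _)) h6
  rw [ENNReal.toReal_ofReal (by positivity), ENNReal.toReal_mul] at h7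
  have hmp := ENNReal.toReal_pos hm0 (measure_ne_top _ _)
  have h8 := Real.log_le_log (by positivity) h7
  rw [Real.log_mul two_ne_zero hr0.ne', Real.log_mul hct.ne' hmp.ne'] at h8
  rw [div_le_iff_of_neg hlr, add_mul, div_mul_cancel₀ _ hlr.ne]
  linarith

/-! ### The symbolic space -/

theorem sval_succ {b : ℕ} (j : ℕ → Fin b) (n : ℕ) :
    sval b j (n + 1) = (j 0).val + b * sval b (fun k => j (k + 1)) n := by
  simp only [sval, Finset.sum_range_succ', Finset.mul_sum]
  rw [add_comm]
  congr 1
  · simp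
  · exact Finset.sum_congr rfl fun k _ => by ring

theorem sval_lt {b : ℕ} (j : ℕ → Fin b) (n : ℕ) : sval b j n < b ^ n := by
  induction n generalizing j with
  | zero => simp [sval]
  | succ n ih =>
    rw [sval_succ, pow_succ]
    have h1 := ih (fun k => j (k + 1))
    have h2 := (j 0).isLt
    calc (j 0).val + b * sval b (fun k => j (k + 1)) n
        < b + b * sval b (fun k => j (k + 1)) n := by omega
      _ = b * (sval b (fun k => j (k + 1)) n + 1) := by ring
      _ ≤ b * b ^ n := Nat.mul_le_mul_left _ h1
      _ = b ^ n * b := by ring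

/-- The number `sval j n` determines the first `n` letters of `j` (they are its digits in base `b`). -/
theorem sval_eq_iff {b : ℕ} (j u : ℕ → Fin b) (n : ℕ) :
    sval b j n = sval b u n ↔ j ∈ PiNat.cylinder u n := by
  induction n generalizing j u with
  | zero => simp [sval]
  | succ n ih =>
    have hb : 0 < b := (j 0).pos
    rw [sval_succ, sval_succ]
    have key : j ∈ PiNat.cylinder u (n + 1) ↔
        j 0 = u 0 ∧ (fun k => j (k + 1)) ∈ PiNat.cylinder (fun k => u (k + 1)) n := by
      simp only [PiNat.mem_cylinder_iff]
      constructor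
      · exact fun h => ⟨h 0 (by omega), fun i hi => h (i + 1) (by omega)⟩
      · rintro ⟨h0, h⟩ i hi
        cases i with
        | zero => exact h0
        | succ i => exact h i (by omega)
    rw [key, ← ih]
    constructor
    · intro h
      have h0 : (j 0).val = (u 0).val := by
        have := congrArg (· % b) h
        simpa [Nat.add_mul_mod_self_left, Nat.mod_eq_of_lt (j 0).isLt,
          Nat.mod_eq_of_lt (u 0).isLt] using this
      refine ⟨Fin.ext h0, ?_⟩
      rw [h0] at h
      exact Nat.eq_of_mul_eq_mul_left hb (Nat.add_left_cancel h)
    · rintro ⟨h0, h⟩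
      rw [h0, h]

/-- Cylinders of the symbolic space generate its product `σ`-algebra. -/
theorem generateFrom_cylinders (b : ℕ) :
    (inferInstance : MeasurableSpace (ℕ → Fin b)) =
      MeasurableSpace.generateFrom {s | ∃ x : ℕ → Fin b, ∃ n, s = PiNat.cylinder x n} := by
  have h := (PiNat.isTopologicalBasis_cylinders (fun _ : ℕ => Fin b)).borel_eq_generateFrom
  rw [← h]
  exact BorelSpace.measurable_eq

theorem isPiSystem_cylinders (b : ℕ) :
    IsPiSystem {s : Set (ℕ → Fin b) | ∃ x : ℕ → Fin b, ∃ n, s = PiNat.cylinder x n} := by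
  rintro _ ⟨x, n, rfl⟩ _ ⟨y, m, rfl⟩ ⟨z, hz1, hz2⟩
  refine ⟨z, max n m, ?_⟩
  rw [← PiNat.mem_cylinder_iff_eq.1 hz1, ← PiNat.mem_cylinder_iff_eq.1 hz2]
  ext w
  simp only [mem_inter_iff, PiNat.mem_cylinder_iff]
  constructor
  · rintro ⟨h1, h2⟩ i hi
    rcases lt_max_iff.1 hi with h | h
    · exact h1 i h
    · exact h2 i h
  · exact fun h => ⟨fun i hi => h i (lt_max_of_lt_left hi), fun i hi => h i (lt_max_of_lt_right hi)⟩

theorem measurableSet_cylinder {b : ℕ} (u : ℕ → Fin b) (n : ℕ) :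
    MeasurableSet (PiNat.cylinder u n) :=
  (PiNat.isOpen_cylinder (fun _ : ℕ => Fin b) u n).measurableSet

/-- The defining property of `ν`, for the cylinders `PiNat.cylinder`. -/
theorem IsBernoulli.cylinder {b : ℕ} {ν : Measure (ℕ → Fin b)} (hν : IsBernoulli b ν)
    (u : ℕ → Fin b) (n : ℕ) : ν (PiNat.cylinder u n) = ((b : ℝ≥0∞) ^ n)⁻¹ := by
  rw [← hν.2 n (fun k => u k)]
  congr 1
  ext j
  simp only [PiNat.mem_cylinder_iff, mem_ofPred_eq]
  exact ⟨fun h k => h k k.2, fun h i hi => h ⟨i, hi⟩⟩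

/-- The one-sided shift on the symbolic space. -/
def shift {b : ℕ} (j : ℕ → Fin b) : ℕ → Fin b := fun n => j (n + 1)

theorem measurable_shift {b : ℕ} : Measurable (shift : (ℕ → Fin b) → (ℕ → Fin b)) :=
  measurable_pi_lambda _ fun n => measurable_pi_apply (n + 1)

/-- The first letter is uniform and independent of the shifted sequence. -/
theorem IsBernoulli.first_letter {b : ℕ} {ν : Measure (ℕ → Fin b)} (hν : IsBernoulli b ν)
    (a : Fin b) {E : Set (ℕ → Fin b)} (hE : MeasurableSet E) :
    ν {j | j 0 = a ∧ shift j ∈ E} = (b : ℝ≥0∞)⁻¹ * ν E := by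
  have := hν.1
  have hm : MeasurableSet {j : ℕ → Fin b | j 0 = a} :=
    measurableSet_eq_fun (measurable_pi_apply 0) measurable_const
  have hb0 : (b : ℝ≥0∞) ≠ 0 := by exact_mod_cast a.pos.ne'
  have key : (ν.restrict {j | j 0 = a}).map shift = (b : ℝ≥0∞)⁻¹ • ν := by
    have hcyl : ∀ s ∈ {s : Set (ℕ → Fin b) | ∃ x : ℕ → Fin b, ∃ n, s = PiNat.cylinder x n},
        (ν.restrict {j | j 0 = a}).map shift s = ((b : ℝ≥0∞)⁻¹ • ν) s := by
      rintro _ ⟨x, n, rfl⟩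
      rw [Measure.map_apply measurable_shift (measurableSet_cylinder _ _),
        Measure.restrict_apply (measurable_shift (measurableSet_cylinder _ _)),
        Measure.smul_apply, hν.cylinder, smul_eq_mul]
      have : shift ⁻¹' PiNat.cylinder x n ∩ {j | j 0 = a}
          = PiNat.cylinder (fun k => Nat.casesOn k a x : ℕ → Fin b) (n + 1) := by
        ext j
        simp only [mem_inter_iff, mem_preimage, PiNat.mem_cylinder_iff, mem_ofPred_eq, shift]
        constructor
        · rintro ⟨h, h0⟩ i hi
          cases i with
          | zero => exact h0
          | succ i => exact h i (by omega)
        · exact fun h => ⟨fun i hi => h (i + 1) (by omega), h 0 (by omega)⟩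
      rw [this, hν.cylinder, pow_succ',
        ENNReal.mul_inv (Or.inl hb0) (Or.inl (ENNReal.natCast_ne_top b))]
    have hfin : IsFiniteMeasure ((ν.restrict {j | j 0 = a}).map shift) := inferInstance
    refine ext_of_generate_finite _ (generateFrom_cylinders b) (isPiSystem_cylinders b) hcyl ?_
    have := hcyl univ ⟨fun _ => a, 0, by simp⟩
    exact this
  have h2 := congrArg (fun m => m E) key
  simp only [Measure.smul_apply, smul_eq_mul] at h2
  rw [Measure.map_apply measurable_shift hE, Measure.restrict_apply (measurable_shift hE)] at h2
  rw [← h2]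
  congr 1
  ext j
  exact and_comm

theorem measurable_sval {b : ℕ} (n : ℕ) : Measurable (fun j : ℕ → Fin b => sval b j n) := by
  unfold sval
  exact Finset.measurable_sum _ fun k _ =>
    ((measurable_of_countable (fun a : Fin b => a.val)).comp (measurable_pi_apply k)).mul_const _

theorem measurable_shift_iterate {b : ℕ} (n : ℕ) :
    Measurable (shift^[n] : (ℕ → Fin b) → (ℕ → Fin b)) := measurable_shift.iterate n

open Classical in
/-- The number `sval j N` is uniform on `{0, …, b^N - 1}` and independent of `shift^[N] j`. -/
theorem IsBernoulli.sval_shift {b : ℕ} {ν : Measure (ℕ → Fin b)} (hν : IsBernoulli b ν)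
    (hb : 0 < b) (N : ℕ) (V : Set ℕ) {E : Set (ℕ → Fin b)} (hE : MeasurableSet E) :
    ν {j | sval b j N ∈ V ∧ shift^[N] j ∈ E} =
      (((Finset.range (b ^ N)).filter (· ∈ V)).card : ℝ≥0∞) * ((b : ℝ≥0∞) ^ N)⁻¹ * ν E := by
  have hb0 : (b : ℝ≥0∞) ≠ 0 := by exact_mod_cast hb.ne'
  induction N generalizing V with
  | zero =>
    by_cases h : 0 ∈ V
    · simp [sval, h, Finset.filter_singleton]
    · simp [sval, h, Finset.filter_singleton]
  | succ N ih =>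
    have hdec : {j : ℕ → Fin b | sval b j (N + 1) ∈ V ∧ shift^[N + 1] j ∈ E} =
        ⋃ a : Fin b, {j | j 0 = a ∧ shift j ∈
          {i | sval b i N ∈ {v | a.val + b * v ∈ V} ∧ shift^[N] i ∈ E}} := by
      ext j
      simp only [mem_iUnion, mem_ofPred_eq, sval_succ, Function.iterate_succ_apply]
      constructor
      · exact fun h => ⟨j 0, rfl, h⟩
      · rintro ⟨a, rfl, h⟩
        exact h
    have hm : ∀ a : Fin b, MeasurableSet
        {i : ℕ → Fin b | sval b i N ∈ {v | a.val + b * v ∈ V} ∧ shift^[N] i ∈ E} := fun a =>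
      (measurable_sval N (MeasurableSet.of_discrete (s := {v | a.val + b * v ∈ V}))).inter
        (measurable_shift_iterate N hE)
    rw [hdec, measure_iUnion]
    · have h1 : ∀ a : Fin b, ν {j | j 0 = a ∧ shift j ∈
          {i | sval b i N ∈ {v | a.val + b * v ∈ V} ∧ shift^[N] i ∈ E}} =
          (((Finset.range (b ^ N)).filter (fun v => a.val + b * v ∈ V)).card : ℝ≥0∞) *
            (((b : ℝ≥0∞) ^ (N + 1))⁻¹ * ν E) := by
        intro a
        rw [hν.first_letter a (hm a), ih, pow_succ',
          ENNReal.mul_inv (Or.inl hb0) (Or.inl (ENNReal.natCast_ne_top b))]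
        simp only [mem_ofPred_eq]
        ring
      rw [tsum_fintype, Finset.sum_congr rfl (fun a _ => h1 a), ← Finset.sum_mul, mul_assoc]
      congr 1
      norm_cast
      rw [← Finset.card_sigma]
      refine Finset.card_bij (fun p _ => p.1.val + b * p.2) ?_ ?_ ?_
      · rintro ⟨a, v⟩ h
        simp only [Finset.mem_sigma, Finset.mem_univ, true_and, Finset.mem_filter,
          Finset.mem_range] at h ⊢
        refine ⟨?_, h.2⟩
        have := a.isLt
        calc a.val + b * v < b + b * v := by omega
          _ = b * (v + 1) := by ring
          _ ≤ b * b ^ N := Nat.mul_le_mul_left _ h.1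
          _ = b ^ (N + 1) := by ring
      · rintro ⟨a, v⟩ _ ⟨a', v'⟩ _ h
        have h0 : a.val = a'.val := by
          have := congrArg (· % b) h
          simpa [Nat.add_mul_mod_self_left, Nat.mod_eq_of_lt a.isLt,
            Nat.mod_eq_of_lt a'.isLt] using this
        have ha := Fin.ext h0
        subst ha
        have : v = v' := Nat.eq_of_mul_eq_mul_left hb (Nat.add_left_cancel h)
        rw [this]
      · intro w hw
        simp only [Finset.mem_filter, Finset.mem_range] at hw
        refine ⟨⟨⟨w % b, Nat.mod_lt _ hb⟩, w / b⟩, ?_, Nat.mod_add_div w b⟩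
        simp only [Finset.mem_sigma, Finset.mem_univ, true_and, Finset.mem_filter,
          Finset.mem_range, Nat.mod_add_div]
        refine ⟨?_, hw.2⟩
        rw [Nat.div_lt_iff_lt_mul hb, ← pow_succ]
        exact hw.1
    · intro a a' haa
      refine Set.disjoint_left.2 fun j h h' => haa ?_
      exact h.1.symm.trans h'.1
    · intro a
      exact (measurableSet_eq_fun (measurable_pi_apply 0) measurable_const).inter
        (measurable_shift (hm a))

/-! ### The map `T` and its ergodicity -/

/-- The map `(x, j) ↦ ((x + j₁) / b, σ j)`, where `σ` is the shift: it moves `x` by the inverse branch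
of multiplication by `b` that the first letter of `j` selects. The letter `j₁` is `j 0`. -/
def skewT {b : ℕ} (p : ℝ × (ℕ → Fin b)) : ℝ × (ℕ → Fin b) :=
  ((p.1 + (p.2 0).val) / b, shift p.2)

/-- Lebesgue measure on `[0,1)` times the measure `ν` on sequences. -/
def baseM {b : ℕ} (ν : Measure (ℕ → Fin b)) : Measure (ℝ × (ℕ → Fin b)) :=
  (volume.restrict (Ico (0 : ℝ) 1)).prod ν

instance isProbabilityMeasure_Ico01 :
    IsProbabilityMeasure (volume.restrict (Ico (0 : ℝ) 1)) := ⟨by simp⟩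

theorem measurable_first {b : ℕ} :
    Measurable (fun p : ℝ × (ℕ → Fin b) => (((p.2 0).val : ℕ) : ℝ)) :=
  (measurable_of_countable (fun a : Fin b => ((a.val : ℕ) : ℝ))).comp
    ((measurable_pi_apply 0).comp measurable_snd)

theorem measurable_skewT {b : ℕ} : Measurable (skewT : ℝ × (ℕ → Fin b) → ℝ × (ℕ → Fin b)) :=
  ((measurable_fst.add measurable_first).div_const _).prodMk (measurable_shift.comp measurable_snd)

theorem skewT_iterate {b : ℕ} (hb : 0 < b) (n : ℕ) (p : ℝ × (ℕ → Fin b)) :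
    skewT^[n] p = ((p.1 + sval b p.2 n) / (b : ℝ) ^ n, shift^[n] p.2) := by
  induction n generalizing p with
  | zero => simp [sval]
  | succ n ih =>
    have hb' : (b : ℝ) ≠ 0 := by exact_mod_cast hb.ne'
    rw [Function.iterate_succ_apply, ih, Function.iterate_succ_apply, sval_succ]
    simp only [skewT]
    congr 1
    have : sval b (shift p.2) n = sval b (fun k => p.2 (k + 1)) n := rfl
    rw [this]
    push_cast
    field_simp
    ring

/-- An inverse branch expands the Lebesgue measure of preimages by the factor `b`. -/
theorem volume_preimage_branch {b : ℕ} (hb : 0 < b) (a : ℕ) {J : Set ℝ} (hJ : MeasurableSet J) :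
    volume.restrict (Ico (0 : ℝ) 1) {x | (x + a) / b ∈ J} =
      b * volume (J ∩ Ico ((a : ℝ) / b) (((a + 1 : ℕ) : ℝ) / b)) := by
  have hb' : (0 : ℝ) < b := by exact_mod_cast hb
  have hm : Measurable (fun x : ℝ => (x + a) / b) := by fun_prop
  have hmJ : MeasurableSet {x : ℝ | (x + a) / b ∈ J} := hm hJ
  rw [Measure.restrict_apply hmJ]
  have hset : {x : ℝ | (x + a) / b ∈ J} ∩ Ico (0 : ℝ) 1 = (fun x => x + (a : ℝ)) ⁻¹'
      ((· * (b : ℝ)⁻¹) ⁻¹' (J ∩ Ico ((a : ℝ) / b) (((a + 1 : ℕ) : ℝ) / b))) := by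
    ext x
    simp only [mem_inter_iff, mem_ofPred_eq, mem_preimage, mem_Ico, ← div_eq_mul_inv]
    rw [div_le_div_iff_of_pos_right hb', div_lt_div_iff_of_pos_right hb']
    push_cast
    constructor
    · rintro ⟨h, h1, h2⟩
      exact ⟨h, by linarith, by linarith⟩
    · rintro ⟨h, h1, h2⟩
      exact ⟨h, by linarith, by linarith⟩
  rw [hset, measure_preimage_add_right, Real.volume_preimage_mul_right (inv_ne_zero hb'.ne'),
    inv_inv, abs_of_pos hb', ENNReal.ofReal_natCast]

theorem volume_sum_branches {b : ℕ} (hb : 0 < b) (J : Set ℝ) (m : ℕ) :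
    ∑ a ∈ Finset.range m, volume (J ∩ Ico ((a : ℝ) / b) (((a + 1 : ℕ) : ℝ) / b)) =
      volume (J ∩ Ico 0 ((m : ℝ) / b)) := by
  have hb' : (0 : ℝ) < b := by exact_mod_cast hb
  induction m with
  | zero => simp
  | succ m ih =>
    rw [Finset.sum_range_succ, ih]
    have h1 : (0 : ℝ) ≤ (m : ℝ) / b := by positivity
    have h2 : (m : ℝ) / b ≤ ((m + 1 : ℕ) : ℝ) / b := by
      rw [div_le_div_iff_of_pos_right hb']; push_cast; linarith
    rw [← measure_inter_add_sdiff (J ∩ Ico 0 (((m + 1 : ℕ) : ℝ) / b))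
      (measurableSet_Iio (a := (m : ℝ) / b))]
    congr 2
    · ext x
      simp only [mem_inter_iff, mem_Ico, mem_Iio]
      constructor
      · rintro ⟨h, h3, h4⟩
        exact ⟨⟨h, h3, h4.trans_le h2⟩, h4⟩
      · rintro ⟨⟨h, h3, h4⟩, h5⟩
        exact ⟨h, h3, h5⟩
    · ext x
      simp only [mem_inter_iff, mem_Ico, mem_Iio, Set.mem_sdiff, not_lt]
      constructor
      · rintro ⟨h, h3, h4⟩
        exact ⟨⟨h, h1.trans h3, h4⟩, h3⟩
      · rintro ⟨⟨h, h3, h4⟩, h5⟩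
        exact ⟨h, h5, h4⟩

/-- `skewT` preserves `Leb × ν`: the `b` inverse branches have probability `b⁻¹` each and map
`[0,1)` onto the intervals `[a / b, (a + 1) / b)`, which tile `[0,1)`. -/
theorem measurePreserving_skewT {b : ℕ} (hb : 0 < b) {ν : Measure (ℕ → Fin b)}
    (hν : IsBernoulli b ν) : MeasurePreserving skewT (baseM ν) (baseM ν) := by
  classical
  have := hν.1
  refine ⟨measurable_skewT, ?_⟩
  have hb0 : (b : ℝ≥0∞) ≠ 0 := by exact_mod_cast hb.ne'
  have hbt : (b : ℝ≥0∞) ≠ ∞ := ENNReal.natCast_ne_top b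
  symm
  refine Measure.prod_eq fun J B hJ hB => ?_
  rw [Measure.map_apply measurable_skewT (hJ.prod hB), baseM,
    Measure.prod_apply (measurable_skewT (hJ.prod hB))]
  have hsec : ∀ x : ℝ, ν (Prod.mk x ⁻¹' (skewT ⁻¹' J ×ˢ B)) =
      (∑ a ∈ Finset.range b, {x : ℝ | (x + a) / b ∈ J}.indicator 1 x) * ((b : ℝ≥0∞)⁻¹ * ν B) := by
    intro x
    have h1 := hν.sval_shift hb 1 {v : ℕ | (x + v) / b ∈ J} hB
    have h2 : Prod.mk x ⁻¹' (skewT ⁻¹' J ×ˢ B) =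
        {j | sval b j 1 ∈ {v : ℕ | (x + v) / b ∈ J} ∧ shift^[1] j ∈ B} := by
      ext j
      simp [skewT, sval]
    rw [h2, h1, pow_one, pow_one, mul_assoc]
    congr 1
    rw [Finset.card_filter]
    push_cast
    refine Finset.sum_congr rfl fun a _ => ?_
    simp [indicator_apply]
  have hm : ∀ a : ℕ, MeasurableSet {x : ℝ | (x + a) / b ∈ J} := by
    intro a
    have hm : Measurable (fun x : ℝ => (x + a) / b) := by fun_prop
    exact hm hJ
  simp_rw [hsec]
  rw [lintegral_mul_const _ (Finset.measurable_sum _ fun a _ =>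
    measurable_one.indicator (hm a)), lintegral_finsetSum _ fun a _ =>
    measurable_one.indicator (hm a)]
  simp_rw [lintegral_indicator_one (hm _), volume_preimage_branch hb _ hJ]
  rw [← Finset.mul_sum, volume_sum_branches hb J b, Measure.restrict_apply hJ, ← mul_assoc,
    mul_comm (b : ℝ≥0∞), mul_assoc _ (b : ℝ≥0∞), ENNReal.mul_inv_cancel hb0 hbt, mul_one,
    div_self (by exact_mod_cast hb.ne')]

/-- Asymptotic independence passes from a `π`-system to the generated `σ`-algebra. -/
theorem mixing_induction {X : Type*} [mX : MeasurableSpace X] {μ : Measure X}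
    [IsProbabilityMeasure μ] {T : X → X} (hT : MeasurePreserving T μ μ) {P : Set (Set X)}
    (hgen : mX = MeasurableSpace.generateFrom P) (hpi : IsPiSystem P) (D : Set X)
    (h : ∀ E ∈ P, Tendsto (fun n => μ.real (D ∩ T^[n] ⁻¹' E)) atTop (𝓝 (μ.real D * μ.real E)))
    {E : Set X} (hE : MeasurableSet E) :
    Tendsto (fun n => μ.real (D ∩ T^[n] ⁻¹' E)) atTop (𝓝 (μ.real D * μ.real E)) := by
  have hTn : ∀ n, Measurable T^[n] := fun n => hT.measurable.iterate n
  induction E, hE using MeasurableSpace.induction_on_inter hgen hpi with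
  | empty => simp
  | basic E hE => exact h E hE
  | compl E hE ih =>
    have h1 : ∀ n, μ.real (D ∩ T^[n] ⁻¹' Eᶜ) = μ.real D - μ.real (D ∩ T^[n] ⁻¹' E) := by
      intro n
      have := measureReal_inter_add_sdiff (μ := μ) (s := D) (hTn n hE)
      rw [preimage_compl, ← sdiff_eq]
      linarith
    simp_rw [h1]
    rw [measureReal_compl hE, probReal_univ, mul_sub, mul_one]
    exact tendsto_const_nhds.sub ih
  | iUnion f hd hm ih =>
    have hreal : ∀ (A : ℕ → Set X), Pairwise (Function.onFun Disjoint A) → ∀ B : Set X,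
        (∀ i, MeasurableSet (A i)) → μ.real (B ∩ ⋃ i, A i) = ∑' i, μ.real (B ∩ A i) := by
      intro A hA B hAm
      have : μ (B ∩ ⋃ i, A i) = ∑' i, μ (B ∩ A i) := by
        rw [inter_comm, ← Measure.restrict_apply (MeasurableSet.iUnion hAm), measure_iUnion hA hAm]
        exact tsum_congr fun i => by rw [Measure.restrict_apply (hAm i), inter_comm]
      rw [measureReal_def, this, ENNReal.tsum_toReal_eq fun i => measure_ne_top _ _]
      rfl
    have hsum : Summable fun i => μ.real (f i) := by
      refine ENNReal.summable_toReal ?_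
      rw [← measure_iUnion hd hm]
      exact measure_ne_top _ _
    have h1 : ∀ n, μ.real (D ∩ T^[n] ⁻¹' ⋃ i, f i) = ∑' i, μ.real (D ∩ T^[n] ⁻¹' f i) := by
      intro n
      rw [preimage_iUnion]
      exact hreal _ (fun i j hij => (hd hij).preimage _) D fun i => hTn n (hm i)
    have h2 : μ.real D * μ.real (⋃ i, f i) = ∑' i, μ.real D * μ.real (f i) := by
      have := hreal f hd univ hm
      simp only [univ_inter] at this
      rw [this, tsum_mul_left]
    simp_rw [h1, h2]
    refine tendsto_tsum_of_dominated_convergence hsum ih ?_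
    refine Eventually.of_forall fun n i => ?_
    rw [Real.norm_eq_abs, abs_of_nonneg measureReal_nonneg]
    calc μ.real (D ∩ T^[n] ⁻¹' f i) ≤ μ.real (T^[n] ⁻¹' f i) :=
          measureReal_mono inter_subset_right
      _ = μ.real (f i) := by
          rw [measureReal_def, (hT.iterate n).measure_preimage (hm i).nullMeasurableSet,
            measureReal_def]

open Classical in
/-- The points `(t + v) / b^N`, `0 ≤ v < b^N`, equidistribute in `[0,1)`. -/
theorem count_tendsto {b : ℕ} (hb : 2 ≤ b) (t c : ℝ) :
    Tendsto (fun N : ℕ => (((Finset.range (b ^ N)).filter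
      (fun v : ℕ => (t + v) / (b : ℝ) ^ N < c)).card : ℝ) / (b : ℝ) ^ N) atTop
      (𝓝 (min 1 (max c 0))) := by
  have hb1 : (1 : ℝ) < b := by exact_mod_cast hb
  have hinv : Tendsto (fun N : ℕ => ((b : ℝ) ^ N)⁻¹) atTop (𝓝 0) :=
    tendsto_inv_atTop_zero.comp (tendsto_pow_atTop_atTop_of_one_lt hb1)
  have hcard : ∀ N : ℕ, (((Finset.range (b ^ N)).filter
      (fun v : ℕ => (t + v) / (b : ℝ) ^ N < c)).card : ℝ) / (b : ℝ) ^ N =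
      min 1 ((⌈c * (b : ℝ) ^ N - t⌉₊ : ℝ) * ((b : ℝ) ^ N)⁻¹) := by
    intro N
    have hM : (0 : ℝ) < (b : ℝ) ^ N := by positivity
    have : (Finset.range (b ^ N)).filter (fun v : ℕ => (t + v) / (b : ℝ) ^ N < c) =
        Finset.range (min (b ^ N) ⌈c * (b : ℝ) ^ N - t⌉₊) := by
      ext v
      rw [Finset.mem_filter, Finset.mem_range, Finset.mem_range, lt_min_iff, Nat.lt_ceil,
        div_lt_iff₀ hM, lt_sub_iff_add_lt']
    rw [this, Finset.card_range, Nat.cast_min, ← min_div_div_right hM.le, div_eq_mul_inv _ (_ ^ N),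
      div_eq_mul_inv _ (_ ^ N)]
    push_cast
    rw [mul_inv_cancel₀ hM.ne']
  simp_rw [hcard]
  refine tendsto_const_nhds.min ?_
  have hlow : Tendsto (fun N : ℕ => max (c - t * ((b : ℝ) ^ N)⁻¹) 0) atTop (𝓝 (max c 0)) := by
    have : Tendsto (fun N : ℕ => c - t * ((b : ℝ) ^ N)⁻¹) atTop (𝓝 (c - t * 0)) :=
      tendsto_const_nhds.sub (hinv.const_mul t)
    rw [mul_zero, sub_zero] at this
    exact this.max tendsto_const_nhds
  have hup : Tendsto (fun N : ℕ => max (c - t * ((b : ℝ) ^ N)⁻¹) 0 + ((b : ℝ) ^ N)⁻¹) atTop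
      (𝓝 (max c 0)) := by
    simpa using hlow.add hinv
  have hmax : ∀ N : ℕ, max (c - t * ((b : ℝ) ^ N)⁻¹) 0 =
      max (c * (b : ℝ) ^ N - t) 0 * ((b : ℝ) ^ N)⁻¹ := by
    intro N
    have hM : (0 : ℝ) < (b : ℝ) ^ N := by positivity
    rw [max_mul_of_nonneg _ _ (inv_nonneg.2 hM.le), zero_mul, sub_mul, mul_assoc,
      mul_inv_cancel₀ hM.ne', mul_one]
  refine tendsto_of_tendsto_of_tendsto_of_le_of_le hlow hup (fun N => ?_) (fun N => ?_)
  · have hM : (0 : ℝ) < (b : ℝ) ^ N := by positivity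
    simp only [hmax]
    exact mul_le_mul_of_nonneg_right (max_le (Nat.le_ceil _) (Nat.cast_nonneg _))
      (inv_nonneg.2 hM.le)
  · have hM : (0 : ℝ) < (b : ℝ) ^ N := by positivity
    simp only [hmax]
    rw [← add_one_mul]
    refine mul_le_mul_of_nonneg_right ?_ (inv_nonneg.2 hM.le)
    refine le_trans ?_ (Nat.ceil_lt_add_one (le_max_right _ _)).le
    exact_mod_cast Nat.ceil_mono (le_max_left _ _)

open Classical in
/-- Mixing of `skewT` for sets of a simple form: after the first `k` letters have been prescribed,
the next `N` letters move `x` to one of `b ^ N` equidistributed points, independently of the later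
letters. -/
theorem mixing_rect {b : ℕ} (hb : 2 ≤ b) {ν : Measure (ℕ → Fin b)} (hν : IsBernoulli b ν)
    {A : Set ℝ} (hA : MeasurableSet A) (u : ℕ → Fin b) (k : ℕ) (c : ℝ)
    {B : Set (ℕ → Fin b)} (hB : MeasurableSet B) :
    Tendsto (fun n => (baseM ν) ((A ×ˢ PiNat.cylinder u k) ∩ skewT^[n] ⁻¹' (Iio c ×ˢ B))) atTop
      (𝓝 ((baseM ν) (A ×ˢ PiNat.cylinder u k) * (baseM ν) (Iio c ×ˢ B))) := by
  have := hν.1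
  have hb0 : 0 < b := by omega
  have hbr : (0 : ℝ) < b := by exact_mod_cast hb0
  rw [← tendsto_add_atTop_iff_nat k]
  have hms : ∀ n, MeasurableSet ((A ×ˢ PiNat.cylinder u k) ∩ skewT^[n] ⁻¹' (Iio c ×ˢ B)) :=
    fun n => (hA.prod (measurableSet_cylinder u k)).inter
      ((measurable_skewT.iterate n) (measurableSet_Iio.prod hB))
  have hsec : ∀ (N : ℕ) (x : ℝ), ν (Prod.mk x ⁻¹'
      ((A ×ˢ PiNat.cylinder u k) ∩ skewT^[N + k] ⁻¹' (Iio c ×ˢ B))) =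
      A.indicator (fun x => ((b : ℝ≥0∞) ^ k)⁻¹ * (ENNReal.ofReal ((((Finset.range (b ^ N)).filter
      (fun v : ℕ => ((x + sval b u k) / (b : ℝ) ^ k + v) / (b : ℝ) ^ N < c)).card : ℝ) /
        (b : ℝ) ^ N) * ν B)) x := by
    intro N x
    by_cases hx : x ∈ A
    · rw [indicator_of_mem hx]
      set V : Set ℕ := {v : ℕ | ((x + sval b u k) / (b : ℝ) ^ k + v) / (b : ℝ) ^ N < c} with hV
      have hE : MeasurableSet {i : ℕ → Fin b | sval b i N ∈ V ∧ shift^[N] i ∈ B} :=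
        (measurable_sval N (MeasurableSet.of_discrete (s := V))).inter
          (measurable_shift_iterate N hB)
      -- The first `k` letters take `x` to `(x + sval b u k) / b ^ k`; the condition at time `N + k`
      -- then only involves the shifted sequence.
      have hset : Prod.mk x ⁻¹' ((A ×ˢ PiNat.cylinder u k) ∩ skewT^[N + k] ⁻¹' (Iio c ×ˢ B)) =
          {j | sval b j k ∈ ({sval b u k} : Set ℕ) ∧ shift^[k] j ∈
            {i : ℕ → Fin b | sval b i N ∈ V ∧ shift^[N] i ∈ B}} := by
        ext j
        simp only [mem_preimage, mem_inter_iff, mem_prod, hx, true_and, mem_ofPred_eq,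
          mem_singleton_iff, sval_eq_iff, mem_Iio, hV]
        refine and_congr_right fun hj => ?_
        rw [Function.iterate_add_apply, skewT_iterate hb0 k, skewT_iterate hb0 N]
        simp only
        rw [(sval_eq_iff j u k).2 hj]
      rw [hset, hν.sval_shift hb0 k _ hE, hν.sval_shift hb0 N V hB]
      have h1 : ∀ s : Finset ℕ, (∀ v, v ∈ s ↔ v < b ^ k ∧ v = sval b u k) → s.card = 1 := by
        intro s hs
        rw [Finset.card_eq_one]
        refine ⟨sval b u k, ?_⟩
        ext v
        rw [hs, Finset.mem_singleton]
        exact ⟨fun h => h.2, fun h => ⟨h ▸ sval_lt u k, h⟩⟩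
      rw [h1 _ fun v => by
          simp only [Finset.mem_filter, Finset.mem_range, mem_singleton_iff],
        Nat.cast_one, one_mul,
        ENNReal.ofReal_div_of_pos (by positivity), ENNReal.ofReal_natCast,
        ENNReal.ofReal_pow hbr.le, ENNReal.ofReal_natCast, div_eq_mul_inv]
      rfl
    · rw [indicator_of_notMem hx]
      have : Prod.mk x ⁻¹' ((A ×ˢ PiNat.cylinder u k) ∩ skewT^[N + k] ⁻¹' (Iio c ×ˢ B)) = ∅ := by
        ext j
        simp [hx]
      rw [this, measure_empty]
  have hlim : (baseM ν) (A ×ˢ PiNat.cylinder u k) * (baseM ν) (Iio c ×ˢ B) =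
      ∫⁻ x, A.indicator (fun _ => ((b : ℝ≥0∞) ^ k)⁻¹ * (ENNReal.ofReal (min 1 (max c 0)) * ν B)) x
        ∂(volume.restrict (Ico (0 : ℝ) 1)) := by
    rw [lintegral_indicator_const hA, baseM, Measure.prod_prod, Measure.prod_prod, hν.cylinder]
    have : volume.restrict (Ico (0 : ℝ) 1) (Iio c) = ENNReal.ofReal (min 1 (max c 0)) := by
      rw [Measure.restrict_apply measurableSet_Iio]
      have : Iio c ∩ Ico (0 : ℝ) 1 = Ico 0 (min 1 c) := by
        ext x
        simp only [mem_inter_iff, mem_Iio, mem_Ico, lt_min_iff]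
        tauto
      rw [this, Real.volume_Ico, sub_zero]
      rcases le_total c 0 with h | h
      · rw [max_eq_right h, min_eq_right (h.trans zero_le_one), min_eq_right zero_le_one,
          ENNReal.ofReal_of_nonpos h, ENNReal.ofReal_zero]
      · rw [max_eq_left h]
    rw [this]
    ring
  rw [hlim]
  have hint : ∀ N, (baseM ν) ((A ×ˢ PiNat.cylinder u k) ∩ skewT^[N + k] ⁻¹' (Iio c ×ˢ B)) =
      ∫⁻ x, ν (Prod.mk x ⁻¹' ((A ×ˢ PiNat.cylinder u k) ∩ skewT^[N + k] ⁻¹' (Iio c ×ˢ B)))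
        ∂(volume.restrict (Ico (0 : ℝ) 1)) := fun N => Measure.prod_apply (hms _)
  simp_rw [hint]
  refine tendsto_lintegral_of_dominated_convergence (fun _ => 1)
    (fun N => measurable_measure_prodMk_left (hms _)) ?_ ?_ ?_
  · exact fun N => Eventually.of_forall fun x => prob_le_one
  · simp
  · refine Eventually.of_forall fun x => ?_
    simp_rw [hsec]
    by_cases hx : x ∈ A
    · simp only [indicator_of_mem hx]
      have hbk : ((b : ℝ≥0∞) ^ k)⁻¹ ≠ ∞ := by
        rw [ENNReal.inv_ne_top]
        exact pow_ne_zero _ (by exact_mod_cast hb0.ne')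
      refine ENNReal.Tendsto.const_mul ?_ (Or.inr hbk)
      refine ENNReal.Tendsto.mul_const ?_ (Or.inr (measure_ne_top _ _))
      exact ENNReal.tendsto_ofReal (count_tendsto hb _ c)
    · simp only [indicator_of_notMem hx]
      exact tendsto_const_nhds

/-- `skewT` is ergodic: by mixing, an invariant set is independent of every measurable set, hence
of itself. -/
theorem ergodic_skewT {b : ℕ} (hb : 2 ≤ b) {ν : Measure (ℕ → Fin b)}
    (hν : IsBernoulli b ν) : Ergodic skewT (baseM ν) := by
  have := hν.1
  have hprob : IsProbabilityMeasure (baseM ν) := by unfold baseM; infer_instance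
  have hmp := measurePreserving_skewT (by omega) hν
  refine { hmp with aeconst_set := ?_ }
  intro s hs hinv
  have hinvn : ∀ n, skewT^[n] ⁻¹' s = s := by
    intro n
    induction n with
    | zero => rfl
    | succ n ih => rw [Function.iterate_succ, preimage_comp, ih, hinv]
  -- An invariant set is independent of every measurable rectangle with a cylinder as base.
  have hrect : ∀ (A : Set ℝ), MeasurableSet A → ∀ (u : ℕ → Fin b) (k : ℕ),
      (baseM ν).real ((A ×ˢ PiNat.cylinder u k) ∩ s) =
        (baseM ν).real (A ×ˢ PiNat.cylinder u k) * (baseM ν).real s := by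
    intro A hA u k
    have hgen : (inferInstance : MeasurableSpace (ℝ × (ℕ → Fin b))) =
        MeasurableSpace.generateFrom
          (image2 (· ×ˢ ·) (range Iio) {B : Set (ℕ → Fin b) | MeasurableSet B}) := by
      symm
      refine generateFrom_eq_prod ?_ MeasurableSpace.generateFrom_measurableSet ?_
        isCountablySpanning_measurableSet
      · rw [← borel_eq_generateFrom_Iio]
        exact BorelSpace.measurable_eq.symm
      · refine ⟨fun n => Iio (n : ℝ), fun n => ⟨_, rfl⟩, ?_⟩
        refine eq_univ_of_forall fun x => ?_
        obtain ⟨n, hn⟩ := exists_nat_gt x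
        exact mem_iUnion.2 ⟨n, hn⟩
    have hpi : IsPiSystem
        (image2 (· ×ˢ ·) (range (Iio : ℝ → Set ℝ)) {B : Set (ℕ → Fin b) | MeasurableSet B}) :=
      isPiSystem_Iio.prod MeasurableSpace.isPiSystem_measurableSet
    have hmix := mixing_induction hmp hgen hpi (A ×ˢ PiNat.cylinder u k) (by
      rintro _ ⟨_, ⟨c, rfl⟩, B, hB, rfl⟩
      have h1 := mixing_rect hb hν hA u k c hB
      have h2 := (ENNReal.tendsto_toReal
        (ENNReal.mul_ne_top (measure_ne_top _ _) (measure_ne_top _ _))).comp h1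
      rw [ENNReal.toReal_mul] at h2
      exact h2) hs
    simp_rw [hinvn] at hmix
    exact tendsto_nhds_unique tendsto_const_nhds hmix
  have hind : (baseM ν).restrict s = (baseM ν) s • (baseM ν) := by
    refine ext_of_generate_finite
      (image2 (· ×ˢ ·) {A : Set ℝ | MeasurableSet A}
        {s : Set (ℕ → Fin b) | ∃ x : ℕ → Fin b, ∃ n, s = PiNat.cylinder x n}) ?_
      (MeasurableSpace.isPiSystem_measurableSet.prod (isPiSystem_cylinders b)) ?_ ?_
    · symm
      refine generateFrom_eq_prod MeasurableSpace.generateFrom_measurableSet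
        (generateFrom_cylinders b).symm isCountablySpanning_measurableSet ?_
      exact ⟨fun _ => univ, fun _ => ⟨fun _ => ⟨0, by omega⟩, 0, by simp⟩, iUnion_const _⟩
    · rintro _ ⟨A, hA, _, ⟨u, k, rfl⟩, rfl⟩
      have hA' : MeasurableSet A := hA
      have h := hrect A hA' u k
      simp only [measureReal_def, ← ENNReal.toReal_mul] at h
      rw [ENNReal.toReal_eq_toReal_iff' (measure_ne_top _ _)
        (ENNReal.mul_ne_top (measure_ne_top _ _) (measure_ne_top _ _))] at h
      rw [Measure.restrict_apply (hA'.prod (measurableSet_cylinder u k)), h,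
        Measure.smul_apply, smul_eq_mul, mul_comm]
    · simp
  have hsq : (baseM ν) s = (baseM ν) s * (baseM ν) s := by
    have := congrArg (fun m => m s) hind
    simpa [hs] using this
  rw [Filter.eventuallyConst_set']
  by_cases h0 : (baseM ν) s = 0
  · left
    exact ae_eq_empty.2 h0
  · right
    have h1 : (baseM ν) s = 1 := by
      have := (ENNReal.mul_eq_left h0 (measure_ne_top _ _)).1 hsq.symm
      exact this
    rw [ae_eq_univ, prob_compl_eq_zero_iff hs]
    exact h1

/-! ### Local entropies -/

/-- The abstract form of the local entropy computation. The ratios `β⁻¹ * d n (T p) / d (n + 1) p`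
are at most `1`, converge almost everywhere, and satisfy a weak type maximal inequality. The
inequality makes the supremum over `n` of minus their logarithms integrable, so that Maker's theorem
applies to these logarithms, and `-log (d n p) / n` converges to a constant. -/
theorem local_entropy {X : Type*} [MeasurableSpace X] {μ : Measure X} [IsProbabilityMeasure μ]
    {T : X → X} (hT : Ergodic T μ) {β M : ℝ} (hβ : 0 < β) (hM : 0 ≤ M) {d : ℕ → X → ℝ}
    (hdm : ∀ n, Measurable (d n)) (hd0 : ∀ p, d 0 p = 1) (hpos : ∀ᵐ p ∂μ, ∀ n, 0 < d n p)
    (hle : ∀ n p, β⁻¹ * d n (T p) ≤ d (n + 1) p)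
    (hweak : ∀ c : ℝ, 0 < c →
      μ {p | ∃ n, β⁻¹ * d n (T p) ≤ c * d (n + 1) p} ≤ ENNReal.ofReal (M * c))
    (hlim : ∀ᵐ p ∂μ, ∃ l, Tendsto (fun n => β⁻¹ * d n (T p) / d (n + 1) p) atTop (𝓝 l)) :
    ∃ h, ∀ᵐ p ∂μ, Tendsto (fun n : ℕ => -Real.log (d n p) / n) atTop (𝓝 h) := by
  have hTm : Measurable T := hT.measurable
  -- `g (n + 1)` is the information lost in one step, `-log` of the factor.
  let g : ℕ → X → ℝ := fun n p =>
    match n with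
    | 0 => 0
    | n + 1 => Real.log β - Real.log (d n (T p)) + Real.log (d (n + 1) p)
  have hgm : ∀ n, Measurable (g n) := by
    intro n
    cases n with
    | zero => exact measurable_const
    | succ n =>
      exact (measurable_const.sub (Real.measurable_log.comp ((hdm n).comp hTm))).add
        (Real.measurable_log.comp (hdm (n + 1)))
  -- Telescoping along the orbit.
  have htel : ∀ n p, -Real.log (d n p) =
      n * Real.log β - ∑ k ∈ Finset.range n, g (n - k) (T^[k] p) := by
    intro n
    induction n with
    | zero => intro p; simp [hd0]
    | succ n ih =>
      intro p
      rw [Finset.sum_range_succ']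
      have h1 : ∀ k, g (n + 1 - (k + 1)) (T^[k + 1] p) = g (n - k) (T^[k] (T p)) := by
        intro k
        rw [Nat.add_sub_add_right, Function.iterate_succ_apply]
      simp_rw [h1]
      have h2 : g (n + 1 - 0) (T^[0] p) =
          Real.log β - Real.log (d n (T p)) + Real.log (d (n + 1) p) := rfl
      have h3 := ih (T p)
      rw [h2]
      push_cast
      linarith
  have hposT : ∀ᵐ p ∂μ, ∀ n, 0 < d n (T p) := hT.toMeasurePreserving.quasiMeasurePreserving.ae hpos
  have hg : ∀ᵐ p ∂μ, ∀ n, g (n + 1) p = -Real.log (β⁻¹ * d n (T p) / d (n + 1) p) := by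
    filter_upwards [hpos, hposT] with p h1 h2 n
    rw [Real.log_div (mul_pos (inv_pos.2 hβ) (h2 n)).ne' (h1 _).ne',
      Real.log_mul (inv_pos.2 hβ).ne' (h2 n).ne', Real.log_inv]
    change Real.log β - Real.log (d n (T p)) + Real.log (d (n + 1) p) = _
    ring
  have hg0 : ∀ᵐ p ∂μ, ∀ n, 0 ≤ g n p := by
    filter_upwards [hg, hpos, hposT] with p h h1 h2 n
    cases n with
    | zero => exact le_rfl
    | succ n =>
      rw [h]
      have := Real.log_nonpos (div_nonneg (mul_pos (inv_pos.2 hβ) (h2 n)).le (h1 (n + 1)).le)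
        ((div_le_one (h1 (n + 1))).2 (hle n p))
      linarith
  -- `A k` is the set where the maximal function `sup |g n|` exceeds `k`; it has measure `O(exp (-k))`.
  let A : ℕ → Set X := fun k => {p | ∃ n, (k : ℝ) < |g n p|}
  have hAm : ∀ k, MeasurableSet (A k) := by
    intro k
    have : A k = ⋃ n, {p | (k : ℝ) < |g n p|} := by ext p; simp [A]
    rw [this]
    exact MeasurableSet.iUnion fun n => measurableSet_lt measurable_const (hgm n).abs
  have hA : ∀ k, μ (A k) ≤ ENNReal.ofReal (M * Real.exp (-(k : ℝ))) := by
    intro k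
    refine le_trans (measure_mono_ae ?_) (hweak _ (Real.exp_pos _))
    filter_upwards [hg, hg0, hpos, hposT] with p h h0 h1 h2 hp
    obtain ⟨n, hn⟩ := hp
    rw [abs_of_nonneg (h0 n)] at hn
    cases n with
    | zero => exact absurd hn (not_lt.2 (Nat.cast_nonneg k))
    | succ n =>
      refine ⟨n, ?_⟩
      rw [h] at hn
      rw [← div_le_iff₀ (h1 _)]
      rw [← Real.log_le_iff_le_exp (div_pos (mul_pos (inv_pos.2 hβ) (h2 n)) (h1 _))]
      linarith
  -- `G` counts the sets `A k` containing a point; it dominates the maximal function.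
  let G : X → ℝ≥0∞ := fun p => ∑' k, (A k).indicator 1 p
  have hGm : Measurable G := Measurable.tsum fun k => measurable_one.indicator (hAm k)
  have hGint : ∫⁻ p, G p ∂μ ≠ ∞ := by
    rw [lintegral_tsum fun k => (measurable_one.indicator (hAm k)).aemeasurable]
    simp_rw [lintegral_indicator_one (hAm _)]
    refine ne_top_of_le_ne_top ?_ (ENNReal.tsum_le_tsum hA)
    rw [← ENNReal.ofReal_tsum_of_nonneg (fun k => mul_nonneg hM (Real.exp_pos _).le)]
    · exact ENNReal.ofReal_ne_top
    · exact Real.summable_exp_neg_nat.mul_left M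
  have hGtop : ∀ᵐ p ∂μ, G p < ∞ := ae_lt_top hGm hGint
  have hbd : ∀ᵐ p ∂μ, ∀ n, |g n p| ≤ (G p).toReal := by
    filter_upwards [hGtop] with p hp n
    have h1 : ((⌈|g n p|⌉₊ : ℕ) : ℝ≥0∞) ≤ G p := by
      calc ((⌈|g n p|⌉₊ : ℕ) : ℝ≥0∞) = ∑ k ∈ Finset.range ⌈|g n p|⌉₊, (A k).indicator 1 p := by
            rw [Finset.sum_congr rfl (g := fun _ => (1 : ℝ≥0∞))]
            · simp
            · intro k hk
              rw [Finset.mem_range, Nat.lt_ceil] at hk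
              exact indicator_of_mem (show p ∈ A k from ⟨n, hk⟩) _
        _ ≤ G p := ENNReal.sum_le_tsum _
    have h2 := ENNReal.toReal_mono hp.ne h1
    rw [ENNReal.toReal_natCast] at h2
    exact (Nat.le_ceil _).trans h2
  have hglim : ∀ᵐ p ∂μ, ∃ l, Tendsto (fun n => g n p) atTop (𝓝 l) := by
    filter_upwards [hg, hlim, hbd, hpos, hposT] with p h ⟨l, hl⟩ hb h1 h2
    have hlow : Real.exp (-(G p).toReal) ≤ l := by
      refine ge_of_tendsto' hl fun n => ?_
      have h3 := (le_abs_self _).trans (hb (n + 1))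
      rw [h] at h3
      rw [← Real.le_log_iff_exp_le (div_pos (mul_pos (inv_pos.2 hβ) (h2 n)) (h1 _))]
      linarith
    refine ⟨-Real.log l, ?_⟩
    rw [← tendsto_add_atTop_iff_nat 1]
    simp_rw [h]
    exact (hl.log ((Real.exp_pos _).trans_le hlow).ne').neg
  obtain ⟨c, hc⟩ := maker hT hgm (integrable_toReal_of_lintegral_ne_top hGm.aemeasurable hGint)
    hbd hglim
  refine ⟨Real.log β - c, ?_⟩
  filter_upwards [hc] with p hp
  refine (hp.const_sub (Real.log β)).congr' ?_
  filter_upwards [eventually_gt_atTop 0] with n hn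
  have hn' : (n : ℝ) ≠ 0 := by exact_mod_cast hn.ne'
  rw [htel, sub_div, mul_div_cancel_left₀ _ hn']

/-! ### The function `S` -/

theorem exists_bound {φ : ℝ → ℝ} (hper : ∀ x : ℝ, φ (x + 1) = φ x) (hc : Continuous φ) :
    ∃ C : ℝ, 0 ≤ C ∧ ∀ x, |φ x| ≤ C := by
  have hp : Function.Periodic φ 1 := hper
  obtain ⟨C, hC⟩ := (hp.isBounded_of_continuous one_ne_zero hc).exists_norm_le
  exact ⟨C, (norm_nonneg _).trans (hC (φ 0) ⟨0, rfl⟩), fun x => hC (φ x) ⟨x, rfl⟩⟩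

theorem norm_term_le {γ C : ℝ} (hγ : γ ∈ Ioo (0 : ℝ) 1) {φ : ℝ → ℝ} (hC : ∀ x, |φ x| ≤ C)
    (n : ℕ) (y : ℝ) : ‖γ ^ n * φ y‖ ≤ γ ^ n * C := by
  rw [Real.norm_eq_abs, abs_mul, abs_of_pos (pow_pos hγ.1 n)]
  exact mul_le_mul_of_nonneg_left (hC y) (pow_pos hγ.1 n).le

theorem summable_bound {γ : ℝ} (hγ : γ ∈ Ioo (0 : ℝ) 1) (C : ℝ) :
    Summable fun n : ℕ => γ ^ n * C :=
  (summable_geometric_of_lt_one hγ.1.le hγ.2).mul_right C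

theorem summable_S {b : ℕ} {γ C : ℝ} (hγ : γ ∈ Ioo (0 : ℝ) 1) {φ : ℝ → ℝ}
    (hC : ∀ x, |φ x| ≤ C) (x : ℝ) (j : ℕ → Fin b) :
    Summable fun n : ℕ => γ ^ n * φ ((x + sval b j (n + 1)) / (b : ℝ) ^ (n + 1)) :=
  Summable.of_norm_bounded (summable_bound hγ C) fun n => norm_term_le hγ hC n _

theorem abs_S_le {b : ℕ} {γ C : ℝ} (hγ : γ ∈ Ioo (0 : ℝ) 1) {φ : ℝ → ℝ}
    (hC : ∀ x, |φ x| ≤ C) (x : ℝ) (j : ℕ → Fin b) : |S b γ φ x j| ≤ C / (1 - γ) := by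
  have := tsum_of_norm_bounded (f := fun n : ℕ =>
    γ ^ n * φ ((x + sval b j (n + 1)) / (b : ℝ) ^ (n + 1)))
    ((hasSum_geometric_of_lt_one hγ.1.le hγ.2).mul_right C) fun n => norm_term_le hγ hC n _
  rw [div_eq_inv_mul]
  exact this

theorem continuous_S {b : ℕ} {γ C : ℝ} (hγ : γ ∈ Ioo (0 : ℝ) 1) {φ : ℝ → ℝ}
    (hC : ∀ x, |φ x| ≤ C) (hc : Continuous φ) :
    Continuous fun p : ℝ × (ℕ → Fin b) => S b γ φ p.1 p.2 := by
  refine continuous_tsum (fun n => ?_) (summable_bound hγ C) fun n p => norm_term_le hγ hC n _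
  have h1 : Continuous fun p : ℝ × (ℕ → Fin b) => ((sval b p.2 (n + 1) : ℕ) : ℝ) := by
    have : Continuous fun j : ℕ → Fin b => sval b j (n + 1) := by
      unfold sval
      refine continuous_finsetSum _ fun k _ => ?_
      exact (continuous_of_discreteTopology (f := fun a : Fin b => a.val * b ^ k)).comp
        (continuous_apply k)
    exact (continuous_of_discreteTopology (f := fun n : ℕ => (n : ℝ))).comp
      (this.comp continuous_snd)
  exact continuous_const.mul (hc.comp ((continuous_fst.add h1).div_const _))

/-- The self-similarity of `S` under the skew product. -/
theorem S_succ {b : ℕ} (hb : 0 < b) {γ C : ℝ} (hγ : γ ∈ Ioo (0 : ℝ) 1) {φ : ℝ → ℝ}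
    (hC : ∀ x, |φ x| ≤ C) (x : ℝ) (j : ℕ → Fin b) :
    S b γ φ x j = φ ((x + (j 0).val) / b) +
      γ * S b γ φ ((x + (j 0).val) / b) (shift j) := by
  have hb' : (b : ℝ) ≠ 0 := by exact_mod_cast hb.ne'
  unfold S
  rw [(summable_S hγ hC x j).tsum_eq_zero_add, ← tsum_mul_left]
  congr 1
  · simp [sval]
  · refine tsum_congr fun n => ?_
    have h : (x + sval b j (n + 1 + 1)) / (b : ℝ) ^ (n + 1 + 1) =
        ((x + (j 0).val) / b + sval b (shift j) (n + 1)) / (b : ℝ) ^ (n + 1) := by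
      rw [sval_succ]
      have : sval b (shift j) (n + 1) = sval b (fun k => j (k + 1)) (n + 1) := rfl
      rw [this]
      push_cast
      field_simp
      ring
    rw [h]
    ring

/-- `S` is Lipschitz in `x`, uniformly in `j`, since every inverse branch is a contraction. -/
theorem S_lipschitz {b : ℕ} (hb : 0 < b) {γ C : ℝ} (hγ : γ ∈ Ioo (0 : ℝ) 1) {φ : ℝ → ℝ}
    (hC : ∀ x, |φ x| ≤ C) {K : ℝ≥0} (hlip : LipschitzWith K φ) (x x' : ℝ) (j : ℕ → Fin b) :
    |S b γ φ x j - S b γ φ x' j| ≤ K / (1 - γ) * |x - x'| := by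
  unfold S
  rw [← (summable_S hγ hC x j).tsum_sub (summable_S hγ hC x' j)]
  have := tsum_of_norm_bounded (f := fun n : ℕ =>
    γ ^ n * φ ((x + sval b j (n + 1)) / (b : ℝ) ^ (n + 1)) -
    γ ^ n * φ ((x' + sval b j (n + 1)) / (b : ℝ) ^ (n + 1)))
    ((hasSum_geometric_of_lt_one hγ.1.le hγ.2).mul_right (K * |x - x'|)) fun n => by
      rw [← mul_sub, Real.norm_eq_abs, abs_mul, abs_of_pos (pow_pos hγ.1 n)]
      refine mul_le_mul_of_nonneg_left ?_ (pow_pos hγ.1 n).le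
      have h1 := hlip.dist_le_mul ((x + sval b j (n + 1)) / (b : ℝ) ^ (n + 1))
        ((x' + sval b j (n + 1)) / (b : ℝ) ^ (n + 1))
      rw [Real.dist_eq, Real.dist_eq, ← sub_div, add_sub_add_right_eq_sub, abs_div] at h1
      refine h1.trans (mul_le_mul_of_nonneg_left ?_ K.2)
      refine div_le_self (abs_nonneg _) ?_
      have : (1 : ℝ) ≤ (b : ℝ) ^ (n + 1) := one_le_pow₀ (by exact_mod_cast hb)
      exact this.trans (le_abs_self _)
  refine this.trans (le_of_eq ?_)
  rw [← mul_assoc, div_eq_inv_mul]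

/-! ### Balls for the measures `m_x` -/

/-- The `m_x`-measure of the closed ball `B(y, r)`, where `z = (x, y)`. -/
def mball {b : ℕ} (γ : ℝ) (φ : ℝ → ℝ) (ν : Measure (ℕ → Fin b)) (r : ℝ) (z : ℝ × ℝ) : ℝ :=
  (mMeas b γ φ ν z.1 (Metric.closedBall z.2 r)).toReal

theorem measurable_S_right {b : ℕ} {γ : ℝ} {φ : ℝ → ℝ}
    (hS : Continuous fun p : ℝ × (ℕ → Fin b) => S b γ φ p.1 p.2) (x : ℝ) :
    Measurable (S b γ φ x) :=
  (hS.comp (Continuous.prodMk_right x)).measurable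

theorem mMeas_closedBall {b : ℕ} {γ : ℝ} {φ : ℝ → ℝ}
    (hS : Continuous fun p : ℝ × (ℕ → Fin b) => S b γ φ p.1 p.2) (ν : Measure (ℕ → Fin b))
    (x y r : ℝ) : mMeas b γ φ ν x (Metric.closedBall y r) =
      ν (S b γ φ x ⁻¹' Metric.closedBall y r) :=
  Measure.map_apply (measurable_S_right hS x) Metric.isClosed_closedBall.measurableSet

theorem measurable_mball {b : ℕ} {γ : ℝ} {φ : ℝ → ℝ}
    (hS : Continuous fun p : ℝ × (ℕ → Fin b) => S b γ φ p.1 p.2) (ν : Measure (ℕ → Fin b))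
    [IsProbabilityMeasure ν] (r : ℝ) : Measurable (mball γ φ ν r) := by
  have hE : MeasurableSet {q : (ℝ × ℝ) × (ℕ → Fin b) | dist (S b γ φ q.1.1 q.2) q.1.2 ≤ r} := by
    refine measurableSet_le (Measurable.dist ?_ (measurable_snd.comp measurable_fst))
      measurable_const
    exact hS.measurable.comp ((measurable_fst.comp measurable_fst).prodMk measurable_snd)
  have h := (measurable_measure_prodMk_left (ν := ν) hE).ennreal_toReal
  have heq : mball γ φ ν r = fun z =>
      (ν (Prod.mk z ⁻¹' {q | dist (S b γ φ q.1.1 q.2) q.1.2 ≤ r})).toReal := by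
    ext z
    rw [mball, mMeas_closedBall hS]
    rfl
  rw [heq]
  exact h

/-- Inside the cylinder of the first letter of `j`, the ball of radius `γ r` around `S(x,j)` is the
copy of the ball of radius `r` around `S(T(x,j))`. -/
theorem cylinder_inter_ball {b : ℕ} (hb : 0 < b) {γ C : ℝ} (hγ : γ ∈ Ioo (0 : ℝ) 1) {φ : ℝ → ℝ}
    (hC : ∀ x, |φ x| ≤ C) (hc : Continuous φ) {ν : Measure (ℕ → Fin b)} (hν : IsBernoulli b ν)
    (x r : ℝ) (j : ℕ → Fin b) :
    ν ({i | i 0 = j 0} ∩ S b γ φ x ⁻¹' Metric.closedBall (S b γ φ x j) (γ * r)) =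
      (b : ℝ≥0∞)⁻¹ * mMeas b γ φ ν (skewT (x, j)).1
        (Metric.closedBall (S b γ φ (skewT (x, j)).1 (skewT (x, j)).2) r) := by
  have hS := continuous_S (b := b) hγ hC hc
  rw [mMeas_closedBall hS, ← hν.first_letter (j 0)
    (measurable_S_right hS _ Metric.isClosed_closedBall.measurableSet)]
  congr 1
  ext i
  simp only [mem_inter_iff, mem_ofPred_eq, mem_preimage, Metric.mem_closedBall]
  refine and_congr_right fun hi => ?_
  rw [S_succ hb hγ hC x i, S_succ hb hγ hC x j, hi, dist_add_left, Real.dist_eq, ← mul_sub, abs_mul,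
    abs_of_pos hγ.1, mul_le_mul_iff_right₀ hγ.1]
  rfl

/-- The limit of the local entropies at the scales `R γⁿ`. The lower bound on `R` makes the first ball
contain the whole support of `m_x`. -/
theorem entropy_S {b : ℕ} (hb : 2 ≤ b) {γ C R : ℝ} (hγ : γ ∈ Ioo (0 : ℝ) 1) {φ : ℝ → ℝ}
    (hC : ∀ x, |φ x| ≤ C) (hc : Continuous φ) {ν : Measure (ℕ → Fin b)} (hν : IsBernoulli b ν)
    (hR0 : 0 < R) (hR : 2 * (C / (1 - γ)) ≤ R) :
    ∃ h, ∀ᵐ p ∂(baseM ν), Tendsto (fun n : ℕ =>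
      -Real.log (mball γ φ ν (R * γ ^ n) (p.1, S b γ φ p.1 p.2)) / n) atTop (𝓝 h) := by
  have := hν.1
  have hb0 : 0 < b := by omega
  have hprob : IsProbabilityMeasure (baseM ν) := by unfold baseM; infer_instance
  have hS := continuous_S (b := b) hγ hC hc
  have hSx := measurable_S_right hS
  have hmp : ∀ x, IsProbabilityMeasure (mMeas b γ φ ν x) := fun x =>
    Measure.isProbabilityMeasure_map (hSx x).aemeasurable
  have hT := ergodic_skewT hb hν
  have hr : ∀ n : ℕ, 0 < R * γ ^ n := fun n => mul_pos hR0 (pow_pos hγ.1 n)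
  obtain ⟨N, hN⟩ := exists_maximal_const
  let d : ℕ → ℝ × (ℕ → Fin b) → ℝ := fun n p =>
    mball γ φ ν (R * γ ^ n) (p.1, S b γ φ p.1 p.2)
  have hdm : ∀ n, Measurable (d n) := fun n =>
    (measurable_mball hS ν _).comp (measurable_fst.prodMk hS.measurable)
  have hdmT : ∀ n, Measurable fun p => d n (skewT p) := fun n => (hdm n).comp measurable_skewT
  have hd : ∀ n p, d n p =
      (ν (S b γ φ p.1 ⁻¹' Metric.closedBall (S b γ φ p.1 p.2) (R * γ ^ n))).toReal := by
    intro n p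
    change (mMeas b γ φ ν _ _).toReal = _
    rw [mMeas_closedBall hS]
  have hq : ∀ n x j, (b : ℝ)⁻¹ * d n (skewT (x, j)) = (ν ({i | i 0 = j 0} ∩
      S b γ φ x ⁻¹' Metric.closedBall (S b γ φ x j) (R * γ ^ (n + 1)))).toReal := by
    intro n x j
    have h1 : R * γ ^ (n + 1) = γ * (R * γ ^ n) := by ring
    rw [h1, cylinder_inter_ball hb0 hγ hC hc hν, ENNReal.toReal_mul, ENNReal.toReal_inv,
      ENNReal.toReal_natCast]
    rfl
  refine local_entropy hT (β := b) (M := b * N) (d := d) (by exact_mod_cast hb0) (by positivity)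
    hdm ?_ ?_ ?_ ?_ ?_
  · intro p
    have : S b γ φ p.1 ⁻¹' Metric.closedBall (S b γ φ p.1 p.2) (R * γ ^ 0) = univ := by
      refine eq_univ_of_forall fun i => ?_
      rw [mem_preimage, Metric.mem_closedBall, Real.dist_eq, pow_zero, mul_one]
      have h1 := abs_S_le hγ hC p.1 i
      have h2 := abs_S_le hγ hC p.1 p.2
      exact (abs_sub _ _).trans (by linarith)
    rw [hd, this, measure_univ, ENNReal.toReal_one]
  · have hm : MeasurableSet {p | ∀ n, 0 < d n p} := by
      rw [Set.ofPred_forall]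
      exact MeasurableSet.iInter fun n => measurableSet_lt measurable_const (hdm n)
    refine (Measure.ae_prod_iff_ae_ae hm).2 (Eventually.of_forall fun x => ?_)
    filter_upwards [ae_of_ae_map (hSx x).aemeasurable (ae_closedBall_pos (mMeas b γ φ ν x) hr)]
      with j hj n
    exact ENNReal.toReal_pos (hj n).ne' (measure_ne_top _ _)
  · rintro n ⟨x, j⟩
    rw [hq, hd]
    exact ENNReal.toReal_mono (measure_ne_top _ _) (measure_mono inter_subset_right)
  · intro c hc0
    have hm : MeasurableSet {p | ∃ n, (b : ℝ)⁻¹ * d n (skewT p) ≤ c * d (n + 1) p} := by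
      rw [Set.ofPred_exists]
      exact MeasurableSet.iUnion fun n =>
        measurableSet_le ((hdmT n).const_mul _) ((hdm (n + 1)).const_mul _)
    rw [baseM, Measure.prod_apply hm]
    have hsec : ∀ x, ν (Prod.mk x ⁻¹' {p | ∃ n, (b : ℝ)⁻¹ * d n (skewT p) ≤ c * d (n + 1) p}) ≤
        ENNReal.ofReal (b * N * c) := by
      intro x
      -- Split according to the first letter and apply the maximal inequality to each cylinder.
      calc ν (Prod.mk x ⁻¹' {p | ∃ n, (b : ℝ)⁻¹ * d n (skewT p) ≤ c * d (n + 1) p})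
          ≤ ν (⋃ a : Fin b, {j | j ∈ {i : ℕ → Fin b | i 0 = a} ∧ ∃ n : ℕ,
              ν ({i | i 0 = a} ∩ S b γ φ x ⁻¹'
                Metric.closedBall (S b γ φ x j) (R * γ ^ (n + 1))) ≤
              ENNReal.ofReal c * ν (S b γ φ x ⁻¹'
                Metric.closedBall (S b γ φ x j) (R * γ ^ (n + 1)))}) := by
            refine measure_mono ?_
            rintro j ⟨n, hn⟩
            refine mem_iUnion.2 ⟨j 0, rfl, n, ?_⟩
            rw [hq, hd] at hn
            rw [← ENNReal.toReal_le_toReal (measure_ne_top _ _)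
              (ENNReal.mul_ne_top ENNReal.ofReal_ne_top (measure_ne_top _ _)), ENNReal.toReal_mul,
              ENNReal.toReal_ofReal hc0.le]
            exact hn
        _ ≤ ∑ a : Fin b, N * ENNReal.ofReal c := by
            refine (measure_iUnion_fintype_le _ _).trans (Finset.sum_le_sum fun a _ => ?_)
            refine measure_small_ratio_le hN ν (hSx x) _ _ (fun n => hr (n + 1)) (R := R) fun n => ?_
            exact mul_le_of_le_one_right hR0.le (pow_le_one₀ hγ.1.le hγ.2.le)
        _ = ENNReal.ofReal (b * N * c) := by
            rw [Finset.sum_const, Finset.card_univ, Fintype.card_fin, nsmul_eq_mul,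
              ENNReal.ofReal_mul (by positivity), ENNReal.ofReal_mul (by positivity),
              ENNReal.ofReal_natCast, ENNReal.ofReal_natCast, mul_assoc]
    refine (lintegral_mono hsec).trans ?_
    rw [lintegral_const, measure_univ, mul_one]
  · have hm : MeasurableSet {p | ∃ l, Tendsto (fun n =>
        (b : ℝ)⁻¹ * d n (skewT p) / d (n + 1) p) atTop (𝓝 l)} :=
      measurableSet_exists_tendsto fun n => ((hdmT n).const_mul _).div (hdm (n + 1))
    refine (Measure.ae_prod_iff_ae_ae hm).2 (Eventually.of_forall fun x => ?_)
    have hall : ∀ᵐ j ∂ν, ∀ a : Fin b, ∃ l : ℝ≥0∞, l < ∞ ∧ Tendsto (fun r =>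
        ν ({i | i 0 = a} ∩ S b γ φ x ⁻¹' Metric.closedBall (S b γ φ x j) r) /
          ν (S b γ φ x ⁻¹' Metric.closedBall (S b γ φ x j) r)) (𝓝[>] 0) (𝓝 l) :=
      ae_all_iff.2 fun a => ae_tendsto_ratio ν (hSx x) _
    filter_upwards [hall] with j hj
    obtain ⟨l, hl, hlim⟩ := hj (j 0)
    refine ⟨l.toReal, ?_⟩
    have hseq : Tendsto (fun n : ℕ => R * γ ^ (n + 1)) atTop (𝓝[>] 0) := by
      refine tendsto_nhdsWithin_iff.2 ⟨?_, Eventually.of_forall fun n => hr _⟩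
      have := ((tendsto_pow_atTop_nhds_zero_of_lt_one hγ.1.le hγ.2).comp
        (tendsto_add_atTop_nat 1)).const_mul R
      rwa [mul_zero] at this
    refine ((ENNReal.tendsto_toReal hl.ne).comp (hlim.comp hseq)).congr fun n => ?_
    simp only [Function.comp_apply]
    rw [hq, hd, ENNReal.toReal_div]

/-! ### From geometric scales to all scales -/

/-- Local dimensions are determined by the geometric sequence of scales `R γⁿ`. -/
theorem tendsto_of_geometric {γ R h : ℝ} (hγ : γ ∈ Ioo (0 : ℝ) 1) (hR : 0 < R) {f : ℝ → ℝ}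
    (hf : Monotone f) (hpos : ∀ n : ℕ, 0 < f (R * γ ^ n))
    (hlim : Tendsto (fun n : ℕ => -Real.log (f (R * γ ^ n)) / n) atTop (𝓝 h)) :
    Tendsto (fun r => Real.log (f r) / Real.log r) (𝓝[>] 0) (𝓝 (h / (-Real.log γ))) := by
  set lam := -Real.log γ with hlam
  have hl0 : 0 < lam := by have := Real.log_neg hγ.1 hγ.2; linarith
  -- `r = R γ ^ s r`
  let s : ℝ → ℝ := fun r => (Real.log R - Real.log r) / lam
  have hs : Tendsto s (𝓝[>] 0) atTop := by
    refine Tendsto.atTop_div_const hl0 ?_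
    exact tendsto_atTop_add_const_left _ _ (tendsto_neg_atBot_atTop.comp
      Real.tendsto_log_nhdsGT_zero)
  have hfl : Tendsto (fun r => ⌊s r⌋₊) (𝓝[>] 0) atTop := tendsto_nat_floor_atTop.comp hs
  have h1 : Tendsto (fun r => (⌊s r⌋₊ : ℝ) / s r) (𝓝[>] 0) (𝓝 1) :=
    (tendsto_nat_floor_div_atTop (R := ℝ)).comp hs
  have h2 : Tendsto (fun r => (⌊s r⌋₊ + 1 : ℝ) / s r) (𝓝[>] 0) (𝓝 1) := by
    have := h1.add (tendsto_inv_atTop_zero.comp hs)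
    rw [add_zero] at this
    refine this.congr fun r => ?_
    simp only [Function.comp_apply]
    rw [add_div, one_div]
  have hlow := (hlim.comp hfl).mul h1
  have hup := (hlim.comp ((tendsto_add_atTop_nat 1).comp hfl)).mul h2
  rw [mul_one] at hlow hup
  have hmid : Tendsto (fun r => -Real.log (f r) / s r) (𝓝[>] 0) (𝓝 h) := by
    refine tendsto_of_tendsto_of_tendsto_of_le_of_le' hlow hup ?_ ?_
    all_goals
      filter_upwards [self_mem_nhdsWithin, hs.eventually_ge_atTop 1] with r hr hs1
      have hr0 : 0 < r := hr
      have hsr : Real.log r = Real.log R - lam * s r := by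
        simp only [s]
        field_simp
        ring
      have hn1 : 1 ≤ ⌊s r⌋₊ := Nat.one_le_floor_iff _ |>.2 hs1
      have hn0 : (⌊s r⌋₊ : ℝ) ≠ 0 := by positivity
      have hlogn : ∀ n : ℕ, Real.log (R * γ ^ n) = Real.log R - lam * n := by
        intro n
        rw [Real.log_mul hR.ne' (pow_pos hγ.1 n).ne', Real.log_pow, hlam]
        ring
      have ha : r ≤ R * γ ^ ⌊s r⌋₊ := by
        rw [← Real.log_le_log_iff hr0 (mul_pos hR (pow_pos hγ.1 _)), hlogn, hsr]
        have := mul_le_mul_of_nonneg_left (Nat.floor_le (zero_le_one.trans hs1)) hl0.le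
        linarith
      have hb : R * γ ^ (⌊s r⌋₊ + 1) ≤ r := by
        rw [← Real.log_le_log_iff (mul_pos hR (pow_pos hγ.1 _)) hr0, hlogn, hsr]
        have := mul_le_mul_of_nonneg_left (Nat.lt_floor_add_one (s r)).le hl0.le
        push_cast
        linarith
      have hfr : 0 < f r := (hpos _).trans_le (hf hb)
      have hs0 : 0 < s r := by linarith
      simp only [Function.comp_apply]
    · rw [div_mul_div_cancel₀ hn0, div_le_div_iff_of_pos_right hs0, neg_le_neg_iff]
      exact Real.log_le_log hfr (hf ha)
    · push_cast
      rw [div_mul_div_cancel₀ (by positivity), div_le_div_iff_of_pos_right hs0, neg_le_neg_iff]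
      exact Real.log_le_log (hpos _) (hf hb)
  have hden : Tendsto (fun r => lam - Real.log R * (s r)⁻¹) (𝓝[>] 0) (𝓝 lam) := by
    have := ((tendsto_inv_atTop_zero.comp hs).const_mul (Real.log R)).const_sub lam
    rwa [mul_zero, sub_zero] at this
  refine (hmid.div hden hl0.ne').congr' ?_
  filter_upwards [hs.eventually_gt_atTop 0] with r hs0
  have hsr : Real.log r = Real.log R - lam * s r := by
    simp only [s]
    field_simp
    ring
  simp only [Pi.div_apply]
  rw [hsr, div_div, mul_sub, mul_left_comm, mul_inv_cancel₀ hs0.ne', mul_one,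
    neg_div, ← div_neg]
  congr 1
  ring

theorem tendsto_log_mul_div_log {c : ℝ} (hc : 0 < c) :
    Tendsto (fun r => Real.log (c * r) / Real.log r) (𝓝[>] 0) (𝓝 1) := by
  have h : Tendsto (fun r => Real.log c * (Real.log r)⁻¹ + 1) (𝓝[>] 0) (𝓝 1) := by
    have := ((tendsto_inv_atBot_zero.comp Real.tendsto_log_nhdsGT_zero).const_mul
      (Real.log c)).add_const 1
    rwa [mul_zero, zero_add] at this
  refine h.congr' ?_
  filter_upwards [self_mem_nhdsWithin, Real.tendsto_log_nhdsGT_zero.eventually_lt_atBot 0]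
    with r hr hl
  have hr0 : 0 < r := hr
  rw [Real.log_mul hc.ne' hr0.ne', add_div, div_self hl.ne, div_eq_mul_inv]

/-- Rescaling the argument does not change a logarithmic exponent. -/
theorem tendsto_log_comp_mul {f : ℝ → ℝ} {α c : ℝ} (hc : 0 < c)
    (h : Tendsto (fun r => Real.log (f r) / Real.log r) (𝓝[>] 0) (𝓝 α)) :
    Tendsto (fun r => Real.log (f (c * r)) / Real.log r) (𝓝[>] 0) (𝓝 α) := by
  have hcr : Tendsto (fun r : ℝ => c * r) (𝓝[>] 0) (𝓝[>] 0) := by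
    refine tendsto_nhdsWithin_iff.2 ⟨?_, ?_⟩
    · have : Tendsto (fun r : ℝ => c * r) (𝓝 0) (𝓝 (c * 0)) := (continuous_const_mul c).tendsto 0
      rw [mul_zero] at this
      exact this.mono_left nhdsWithin_le_nhds
    · filter_upwards [self_mem_nhdsWithin] with r hr
      exact mul_pos hc hr
  have := (h.comp hcr).mul (tendsto_log_mul_div_log hc)
  rw [mul_one] at this
  refine this.congr' ?_
  filter_upwards [(Real.tendsto_log_nhdsGT_zero.comp hcr).eventually_lt_atBot 0] with r hr
  exact div_mul_div_cancel₀ hr.ne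

/-- A quantity comparable to `r * f r`, up to constants and rescaling of the argument of `f`, has
logarithmic exponent `1 + α` if `f` has logarithmic exponent `α`. -/
theorem tendsto_one_add {f W : ℝ → ℝ} {α c₁ c₂ d₁ d₂ : ℝ} (hc₁ : 0 < c₁) (hc₂ : 0 < c₂)
    (hd₁ : 0 < d₁) (hd₂ : 0 < d₂) (hpos : ∀ r, 0 < r → 0 < f r)
    (h : Tendsto (fun r => Real.log (f r) / Real.log r) (𝓝[>] 0) (𝓝 α))
    (hlow : ∀ᶠ r in 𝓝[>] 0, c₁ * r * f (d₁ * r) ≤ W r)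
    (hup : ∀ᶠ r in 𝓝[>] 0, W r ≤ c₂ * r * f (d₂ * r)) :
    Tendsto (fun r => Real.log (W r) / Real.log r) (𝓝[>] 0) (𝓝 (1 + α)) := by
  have h1 := (tendsto_log_mul_div_log hc₁).add (tendsto_log_comp_mul hd₁ h)
  have h2 := (tendsto_log_mul_div_log hc₂).add (tendsto_log_comp_mul hd₂ h)
  refine tendsto_of_tendsto_of_tendsto_of_le_of_le' h2 h1 ?_ ?_
  all_goals
    filter_upwards [self_mem_nhdsWithin, hlow, hup,
      Real.tendsto_log_nhdsGT_zero.eventually_lt_atBot 0] with r hr hl hu hlog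
    have hr0 : 0 < r := hr
    have p1 := mul_pos (mul_pos hc₁ hr0) (hpos _ (mul_pos hd₁ hr0))
    have pW := p1.trans_le hl
    rw [← add_div, ← Real.log_mul (by positivity) (hpos _ (by positivity)).ne',
      div_le_div_right_of_neg hlog]
  · exact Real.log_le_log pW hu
  · exact Real.log_le_log p1 hl

/-! ### Balls for the SRB measure -/

/-- The balls of the sup metric are rectangles, so that the fibres integrate the `m_x`-balls. -/
theorem srb_closedBall {b : ℕ} {γ : ℝ} {φ : ℝ → ℝ}
    (hS : Continuous fun p : ℝ × (ℕ → Fin b) => S b γ φ p.1 p.2) (ν : Measure (ℕ → Fin b))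
    [IsProbabilityMeasure ν] (x y r : ℝ) :
    srb b γ φ ν (Metric.closedBall (x, y) r) =
      ∫⁻ x' in Ico 0 1, (Metric.closedBall x r).indicator
        (fun x' => mMeas b γ φ ν x' (Metric.closedBall y r)) x' := by
  have hm : Measurable fun p : ℝ × (ℕ → Fin b) => (p.1, S b γ φ p.1 p.2) :=
    measurable_fst.prodMk hS.measurable
  have hB : MeasurableSet (Metric.closedBall (x, y) r) := Metric.isClosed_closedBall.measurableSet
  rw [srb, Measure.map_apply hm hB, Measure.prod_apply (hm hB)]
  refine lintegral_congr fun x' => ?_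
  rw [← closedBall_prod_same]
  by_cases hx : x' ∈ Metric.closedBall x r
  · rw [indicator_of_mem hx, mMeas_closedBall hS]
    congr 1
    ext j
    exact and_iff_right hx
  · rw [indicator_of_notMem hx]
    have : Prod.mk x' ⁻¹' ((fun p : ℝ × (ℕ → Fin b) => (p.1, S b γ φ p.1 p.2)) ⁻¹'
        Metric.closedBall x r ×ˢ Metric.closedBall y r) = ∅ := by
      refine eq_empty_of_forall_notMem fun j hj => hx hj.1
    rw [this, measure_empty]

/-- Moving the base point from `x` to `x'` moves `S(·,j)` by at most `L |x - x'|`, so a slightly larger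
ball has at least the same measure. -/
theorem mMeas_closedBall_le {b : ℕ} {γ : ℝ} {φ : ℝ → ℝ}
    (hS : Continuous fun p : ℝ × (ℕ → Fin b) => S b γ φ p.1 p.2) (ν : Measure (ℕ → Fin b))
    {L : ℝ} (hL : ∀ x x' (j : ℕ → Fin b), |S b γ φ x j - S b γ φ x' j| ≤ L * |x - x'|)
    {x x' y r r' : ℝ} (h : r + L * |x - x'| ≤ r') :
    mMeas b γ φ ν x (Metric.closedBall y r) ≤ mMeas b γ φ ν x' (Metric.closedBall y r') := by
  rw [mMeas_closedBall hS, mMeas_closedBall hS]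
  refine measure_mono fun j hj => ?_
  rw [mem_preimage, Metric.mem_closedBall] at hj ⊢
  have h1 := dist_triangle (S b γ φ x' j) (S b γ φ x j) y
  have h2 := hL x x' j
  rw [← Real.dist_eq, dist_comm] at h2
  linarith

theorem srb_closedBall_le {b : ℕ} {γ : ℝ} {φ : ℝ → ℝ}
    (hS : Continuous fun p : ℝ × (ℕ → Fin b) => S b γ φ p.1 p.2) (ν : Measure (ℕ → Fin b))
    [IsProbabilityMeasure ν] {L : ℝ} (hL0 : 0 ≤ L)
    (hL : ∀ x x' (j : ℕ → Fin b), |S b γ φ x j - S b γ φ x' j| ≤ L * |x - x'|)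
    (x y r : ℝ) :
    srb b γ φ ν (Metric.closedBall (x, y) r) ≤
      ENNReal.ofReal (2 * r) * mMeas b γ φ ν x (Metric.closedBall y ((1 + L) * r)) := by
  rw [srb_closedBall hS]
  calc ∫⁻ x' in Ico 0 1, (Metric.closedBall x r).indicator
        (fun x' => mMeas b γ φ ν x' (Metric.closedBall y r)) x'
      ≤ ∫⁻ x', (Metric.closedBall x r).indicator
        (fun _ => mMeas b γ φ ν x (Metric.closedBall y ((1 + L) * r))) x' := by
        refine (setLIntegral_le_lintegral _ _).trans (lintegral_mono fun x' => ?_)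
        by_cases hx : x' ∈ Metric.closedBall x r
        · rw [indicator_of_mem hx, indicator_of_mem hx]
          refine mMeas_closedBall_le hS ν hL ?_
          rw [Metric.mem_closedBall, Real.dist_eq] at hx
          have := mul_le_mul_of_nonneg_left hx hL0
          linarith
        · rw [indicator_of_notMem hx]
          exact zero_le
    _ = _ := by
        rw [lintegral_indicator_const Metric.isClosed_closedBall.measurableSet,
          Real.volume_closedBall, mul_comm]

/-- Only the strip of width `δ r` to the right of `x` is used: over it the fibre measures differ from
`m_x` by a displacement of at most `r / 2`. -/
theorem le_srb_closedBall {b : ℕ} {γ : ℝ} {φ : ℝ → ℝ}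
    (hS : Continuous fun p : ℝ × (ℕ → Fin b) => S b γ φ p.1 p.2) (ν : Measure (ℕ → Fin b))
    [IsProbabilityMeasure ν] {L δ : ℝ} (hδ1 : δ ≤ 1) (hδ : L * δ ≤ 1 / 2)
    (hL0 : 0 ≤ L) (hL : ∀ x x' (j : ℕ → Fin b), |S b γ φ x j - S b γ φ x' j| ≤ L * |x - x'|)
    {x y r : ℝ} (hr : 0 < r) (hx : 0 ≤ x) (hxr : x + r < 1) :
    ENNReal.ofReal (δ * r) * mMeas b γ φ ν x (Metric.closedBall y (1 / 2 * r)) ≤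
      srb b γ φ ν (Metric.closedBall (x, y) r) := by
  have hδr : δ * r ≤ r := mul_le_of_le_one_left hr.le hδ1
  rw [srb_closedBall hS]
  calc ENNReal.ofReal (δ * r) * mMeas b γ φ ν x (Metric.closedBall y (1 / 2 * r))
      = ∫⁻ _ in Icc x (x + δ * r), mMeas b γ φ ν x (Metric.closedBall y (1 / 2 * r)) := by
        rw [setLIntegral_const, Real.volume_Icc, add_sub_cancel_left, mul_comm]
    _ ≤ ∫⁻ x' in Icc x (x + δ * r), (Metric.closedBall x r).indicator
        (fun x' => mMeas b γ φ ν x' (Metric.closedBall y r)) x' := by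
        refine setLIntegral_mono' measurableSet_Icc fun x' hx' => ?_
        have habs : |x - x'| ≤ δ * r := by
          rw [abs_sub_comm, abs_of_nonneg (by linarith [hx'.1])]
          linarith [hx'.2]
        rw [indicator_of_mem]
        · refine mMeas_closedBall_le hS ν hL ?_
          have h1 := mul_le_mul_of_nonneg_left habs hL0
          have h2 := mul_le_mul_of_nonneg_right hδ hr.le
          linarith
        · rw [Metric.mem_closedBall, dist_comm, Real.dist_eq]
          linarith
    _ ≤ _ := lintegral_mono_set (show Icc x (x + δ * r) ⊆ Ico 0 1 from
        fun x' hx' => ⟨hx.trans hx'.1, by linarith [hx'.2]⟩)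

/-! ### Exact dimensionality -/

/-- **Ledrappier–Young theorem** for the skew product: `ω` is exact dimensional, there is
`α ∈ [0,1]` such that for Lebesgue-a.e. `x ∈ [0,1]` the measure `m_x` is exact dimensional
with `dim m_x = α`, and `dim ω = 1 + α`. -/
theorem ledrappier_young (b : ℕ) (hb : 2 ≤ b) (γ : ℝ) (hγ : γ ∈ Ioo (0 : ℝ) 1)
    (φ : ℝ → ℝ) (hper : ∀ x : ℝ, φ (x + 1) = φ x) (K : ℝ≥0) (hlip : LipschitzWith K φ)
    (ν : Measure (ℕ → Fin b)) (hν : IsBernoulli b ν) :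
    ∃ α : ℝ, α ∈ Icc (0 : ℝ) 1 ∧
      (∀ᵐ x ∂(volume.restrict (Icc (0 : ℝ) 1)), IsExactDim (mMeas b γ φ ν x) α) ∧
      IsExactDim (srb b γ φ ν) (1 + α) := by
  have := hν.1
  have hb0 : 0 < b := by omega
  have hprob : IsProbabilityMeasure (baseM ν) := by unfold baseM; infer_instance
  obtain ⟨C, hC0, hC⟩ := exists_bound hper hlip.continuous
  have hS := continuous_S (b := b) hγ hC hlip.continuous
  have hSx := measurable_S_right hS
  have hmp : ∀ x, IsProbabilityMeasure (mMeas b γ φ ν x) := fun x =>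
    Measure.isProbabilityMeasure_map (hSx x).aemeasurable
  have hγ1 : 0 < 1 - γ := sub_pos.2 hγ.2
  -- `2 C / (1 - γ)` bounds the diameter of the support of every `m_x`; the `1` makes `R` positive.
  set R : ℝ := 2 * (C / (1 - γ)) + 1 with hRdef
  have hR0 : 0 < R := by positivity
  have hr : ∀ n : ℕ, 0 < R * γ ^ n := fun n => mul_pos hR0 (pow_pos hγ.1 n)
  obtain ⟨h, hh⟩ := entropy_S (R := R) hb hγ hC hlip.continuous hν hR0 (by linarith)
  set α := h / (-Real.log γ) with hα
  -- The good points `(x, y)`, at which the local dimension of `m_x` at `y` is `α`.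
  let good : Set (ℝ × ℝ) := {z | (∀ n : ℕ, 0 < mball γ φ ν (R * γ ^ n) z) ∧
    Tendsto (fun n : ℕ => -Real.log (mball γ φ ν (R * γ ^ n) z) / n) atTop (𝓝 h)}
  have hmb := measurable_mball hS ν
  have hgood : MeasurableSet good := by
    refine MeasurableSet.inter ?_ ?_
    · change MeasurableSet {z | ∀ n : ℕ, 0 < mball γ φ ν (R * γ ^ n) z}
      rw [Set.ofPred_forall]
      exact MeasurableSet.iInter fun n => measurableSet_lt measurable_const (hmb _)
    · exact measurableSet_tendsto _ fun n => ((hmb _).log.neg).div_const _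
  have hgood_lim : ∀ x y, (x, y) ∈ good → Tendsto (fun r : ℝ =>
      Real.log (mMeas b γ φ ν x (Metric.closedBall y r)).toReal / Real.log r)
      (𝓝[>] 0) (𝓝 α) := fun x y hxy =>
    tendsto_of_geometric (f := fun r => (mMeas b γ φ ν x (Metric.closedBall y r)).toReal) hγ hR0
      (fun r r' hrr => ENNReal.toReal_mono (measure_ne_top _ _)
        (measure_mono (Metric.closedBall_subset_closedBall hrr))) hxy.1 hxy.2
  have hpair : Measurable fun p : ℝ × (ℕ → Fin b) => (p.1, S b γ φ p.1 p.2) :=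
    measurable_fst.prodMk hS.measurable
  have hae : ∀ᵐ p ∂(baseM ν), (p.1, S b γ φ p.1 p.2) ∈ good := by
    have hpos : ∀ᵐ p ∂(baseM ν), ∀ n : ℕ,
        0 < mball γ φ ν (R * γ ^ n) (p.1, S b γ φ p.1 p.2) := by
      have hm : MeasurableSet {p : ℝ × (ℕ → Fin b) | ∀ n : ℕ,
          0 < mball γ φ ν (R * γ ^ n) (p.1, S b γ φ p.1 p.2)} := by
        rw [Set.ofPred_forall]
        exact MeasurableSet.iInter fun n => measurableSet_lt measurable_const ((hmb _).comp hpair)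
      refine (Measure.ae_prod_iff_ae_ae hm).2 (Eventually.of_forall fun x => ?_)
      filter_upwards [ae_of_ae_map (hSx x).aemeasurable (ae_closedBall_pos (mMeas b γ φ ν x) hr)]
        with j hj n
      exact ENNReal.toReal_pos (hj n).ne' (measure_ne_top _ _)
    filter_upwards [hpos, hh] with p h1 h2 using ⟨h1, h2⟩
  have hfib : ∀ᵐ x ∂(volume.restrict (Ico (0 : ℝ) 1)), ∀ᵐ y ∂(mMeas b γ φ ν x),
      (x, y) ∈ good := by
    filter_upwards [Measure.ae_ae_of_ae_prod hae] with x hx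
    exact (ae_map_iff (hSx x).aemeasurable (measurable_prodMk_left hgood)).2 hx
  have hdim : ∀ᵐ x ∂(volume.restrict (Ico (0 : ℝ) 1)), IsExactDim (mMeas b γ φ ν x) α := by
    filter_upwards [hfib] with x hx
    filter_upwards [hx] with y hy using hgood_lim x y hy
  refine ⟨α, ⟨?_, ?_⟩, ?_, ?_⟩
  · obtain ⟨p, hp⟩ := hae.exists
    refine ge_of_tendsto (hgood_lim _ _ hp) ?_
    filter_upwards [self_mem_nhdsWithin, Real.tendsto_log_nhdsGT_zero.eventually_lt_atBot 0]
      with r _ hlog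
    refine div_nonneg_of_nonpos (Real.log_nonpos ENNReal.toReal_nonneg ?_) hlog.le
    exact ENNReal.toReal_le_of_le_ofReal zero_le_one (by simpa using prob_le_one)
  · obtain ⟨x, hx⟩ := hdim.exists
    exact localDim_le_one _ hx (NeZero.ne _)
  · rwa [← Measure.restrict_congr_set Ico_ae_eq_Icc]
  · -- The vertical fibres vary in a Lipschitz way, so balls for `ω` are close to products.
    set L : ℝ := K / (1 - γ) with hLdef
    have hL0 : 0 ≤ L := div_nonneg K.2 hγ1.le
    have hL : ∀ x x' (j : ℕ → Fin b), |S b γ φ x j - S b γ φ x' j| ≤ L * |x - x'| :=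
      fun _ _ _ => S_lipschitz hb0 hγ hC hlip _ _ _
    -- `δ` is the width of the strip on which fibres move by at most half the radius.
    set δ : ℝ := 1 / (2 * (1 + L)) with hδdef
    have hδ0 : 0 < δ := by positivity
    have hδ1 : δ ≤ 1 := by
      rw [hδdef, div_le_one (by positivity)]
      linarith
    have hδ : L * δ ≤ 1 / 2 := by
      rw [hδdef, mul_one_div, div_le_div_iff₀ (by positivity) (by positivity)]
      linarith
    have hω : ∀ᵐ z ∂(srb b γ φ ν), z.1 ∈ Ico (0 : ℝ) 1 ∧ z ∈ good := by
      refine (ae_map_iff hpair.aemeasurable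
        ((measurable_fst measurableSet_Ico).inter hgood)).2 ?_
      have h1 : ∀ᵐ p ∂(baseM ν), p.1 ∈ Ico (0 : ℝ) 1 :=
        Measure.quasiMeasurePreserving_fst.ae (ae_restrict_mem measurableSet_Ico)
      filter_upwards [h1, hae] with p h2 h3 using ⟨h2, h3⟩
    filter_upwards [hω] with z hz
    obtain ⟨x, y⟩ := z
    obtain ⟨hx, hz⟩ := hz
    have hx0 : 0 ≤ x := hx.1
    have hx1 : x < 1 := hx.2
    have hfin : ∀ r, srb b γ φ ν (Metric.closedBall (x, y) r) ≠ ∞ := fun r =>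
      ne_top_of_le_ne_top (ENNReal.mul_ne_top ENNReal.ofReal_ne_top (measure_ne_top _ _))
        (srb_closedBall_le hS ν hL0 hL x y r)
    refine tendsto_one_add (f := fun r => (mMeas b γ φ ν x (Metric.closedBall y r)).toReal)
      hδ0 two_pos one_half_pos (by positivity : 0 < 1 + L) ?_ (hgood_lim x y hz) ?_ ?_
    · intro r hr0
      have hseq : Tendsto (fun n : ℕ => R * γ ^ n) atTop (𝓝 0) := by
        have := (tendsto_pow_atTop_nhds_zero_of_lt_one hγ.1.le hγ.2).const_mul R
        rwa [mul_zero] at this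
      obtain ⟨n, hn⟩ := (hseq.eventually_lt_const hr0).exists
      exact (hz.1 n).trans_le (ENNReal.toReal_mono (measure_ne_top _ _)
        (measure_mono (Metric.closedBall_subset_closedBall hn.le)))
    · have hsmall : ∀ᶠ r in 𝓝[>] (0 : ℝ), r < 1 - x :=
        nhdsWithin_le_nhds (gt_mem_nhds (sub_pos.2 hx1))
      filter_upwards [self_mem_nhdsWithin, hsmall] with r hr hrx
      have hr0 : 0 < r := hr
      have := ENNReal.toReal_mono (hfin r)
        (le_srb_closedBall hS ν hδ1 hδ hL0 hL (y := y) hr0 hx0 (by linarith))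
      rwa [ENNReal.toReal_mul, ENNReal.toReal_ofReal (by positivity)] at this
    · filter_upwards [self_mem_nhdsWithin] with r hr
      have hr0 : 0 < r := hr
      have := ENNReal.toReal_mono
        (ENNReal.mul_ne_top ENNReal.ofReal_ne_top (measure_ne_top _ _))
        (srb_closedBall_le hS ν hL0 hL x y r)
      rwa [ENNReal.toReal_mul, ENNReal.toReal_ofReal (by positivity)] at this

end
end Skew
end
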